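/- arXiv:2601.11274 — 2 statements merged into one kernel-verified Lean document; each statement's English description precedes it below -/
import Mathlib

section
/- Let {ν_n}_{n≥1} be a sequence of parametric b-measures on ℝ^N with respect to {ω_j}_{j≥1} admitting, for each j ≥ 1, m-bounds {m_j^n}_{n≥1} that form an equicontinuous family (for every ε > 0 there is δ > 0 with m_j^n([s,t]) < ε whenever 0 ≤ t−s < δ, for all n) and l-bounds {l_j^n}_{n≥1} that form a bounded family (there is c_j > 0 with l_j^n([t,t+1]) ≤ c_j for all t ∈ ℝ and n). Then there exist a subsequence {ν_{n_k}}_{k≥1} and a parametric b-measure ν on ℝ^N with respect to {ω_j}_{j≥1} such that (ν_{n_k})_y(I) → ν_y(I) as k → ∞, for every y ∈ ℝ^N and every compact interval I ⊂ ℝ. -/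
open MeasureTheory Set Filter Topology

/-- A (continuous real) b-measure: a set function on the bounded Borel subsets of `ℝ`
which vanishes on `∅`, is countably additive over countable pairwise disjoint families
of bounded Borel sets with bounded union, and vanishes on singletons. -/
structure IsBMeasure (μ : Set ℝ → ℝ) : Prop where
  empty : μ ∅ = 0
  countably_additive : ∀ A : ℕ → Set ℝ, (∀ n, MeasurableSet (A n)) →
    (∀ n, Bornology.IsBounded (A n)) → Pairwise (Function.onFun Disjoint A) →
    Bornology.IsBounded (⋃ n, A n) →
    HasSum (fun n => μ (A n)) (μ (⋃ n, A n))
  singleton : ∀ t : ℝ, μ {t} = 0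

/-- A locally finite atomless Borel measure on `ℝ`. -/
def GoodMeasure (m : Measure ℝ) : Prop :=
  IsLocallyFiniteMeasure m ∧ ∀ t : ℝ, m {t} = 0

/-- `P` is a finite Borel partition of `A`. -/
def IsBorelPartition (A : Set ℝ) {n : ℕ} (P : Fin n → Set ℝ) : Prop :=
  (∀ i, MeasurableSet (P i)) ∧ Pairwise (Function.onFun Disjoint P) ∧ (⋃ i, P i) = A

/-- `|μ| ≤ m` : total-variation bound of the set function `μ` by the measure `m`,
expressed through finite Borel partitions of bounded Borel sets. -/
def TVLE (μ : Set ℝ → ℝ) (m : Measure ℝ) : Prop :=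
  ∀ A : Set ℝ, Bornology.IsBounded A → MeasurableSet A →
    ∀ (n : ℕ) (P : Fin n → Set ℝ), IsBorelPartition A P →
      ∑ i, |μ (P i)| ≤ (m A).toReal

/-- Partition-sum bound `Σ |μ₁(Aᵢ) - μ₂(Aᵢ)| ≤ c · l(A)` for the difference of two
set functions, over finite Borel partitions of bounded Borel sets. -/
def DiffLE (μ₁ μ₂ : Set ℝ → ℝ) (c : ℝ) (l : Measure ℝ) : Prop :=
  ∀ A : Set ℝ, Bornology.IsBounded A → MeasurableSet A →
    ∀ (n : ℕ) (P : Fin n → Set ℝ), IsBorelPartition A P →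
      ∑ i, |μ₁ (P i) - μ₂ (P i)| ≤ c * (l A).toReal

variable {E : Type*} [NormedAddCommGroup E]

/-- `m` is an m-bound of `ν` on the closed ball of radius `j`. -/
def HasMBound (ν : E → Set ℝ → ℝ) (j : ℕ) (m : Measure ℝ) : Prop :=
  GoodMeasure m ∧ ∀ y : E, ‖y‖ ≤ (j : ℝ) → TVLE (ν y) m

/-- `l` is an l-bound of `ν` on the closed ball of radius `j`, for the modulus `ω`. -/
def HasLBound (ω : ℝ → ℝ) (ν : E → Set ℝ → ℝ) (j : ℕ) (l : Measure ℝ) : Prop :=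
  GoodMeasure l ∧ ∀ y₁ y₂ : E, ‖y₁‖ ≤ (j : ℝ) → ‖y₂‖ ≤ (j : ℝ) →
    DiffLE (ν y₁) (ν y₂) (ω ‖y₁ - y₂‖) l

/-- A non-decreasing family of moduli of continuity `{ω_j}`. -/
structure IsModulusFamily (ω : ℕ → ℝ → ℝ) : Prop where
  continuousOn : ∀ j, ContinuousOn (ω j) (Ici 0)
  monotoneOn : ∀ j, MonotoneOn (ω j) (Ici 0)
  map_zero : ∀ j, ω j 0 = 0
  nonneg : ∀ j x, 0 ≤ x → 0 ≤ ω j x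
  mono_index : ∀ j x, 0 ≤ x → ω j x ≤ ω (j + 1) x

/-- A parametric b-measure on `E` with respect to the family of moduli `ω`. -/
def IsParamBMeasure (ω : ℕ → ℝ → ℝ) (ν : E → Set ℝ → ℝ) : Prop :=
  (∀ y, IsBMeasure (ν y)) ∧
    ∀ j : ℕ, 1 ≤ j → ∃ m l : Measure ℝ, HasMBound ν j m ∧ HasLBound (ω j) ν j l

/-- A tagged partition of `[a,b]`. -/
structure TaggedPartition (a b : ℝ) where
  k : ℕ
  k_pos : 0 < k
  t : ℕ → ℝ
  tag : ℕ → ℝ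
  left : t 0 = a
  right : t k = b
  lt : ∀ i < k, t i < t (i + 1)
  tag_mem : ∀ i < k, tag i ∈ Set.Icc (t i) (t (i + 1))

/-- The mesh of the tagged partition is `< δ`. -/
def TaggedPartition.MeshLT {a b : ℝ} (P : TaggedPartition a b) (δ : ℝ) : Prop :=
  ∀ i < P.k, P.t (i + 1) - P.t i < δ

/-- The Riemann sum of the parametric b-measure `ν` along the curve `y` over the
tagged partition `P`. -/
def RiemannSum (ν : E → Set ℝ → ℝ) (y : ℝ → E) {a b : ℝ} (P : TaggedPartition a b) : ℝ :=
  ∑ i ∈ Finset.range P.k, ν (y (P.tag i)) (Set.Icc (P.t i) (P.t (i + 1)))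

/-- `L = ∫_a^b dν_{y(s)}` : `L` is the limit of the Riemann sums of `ν` along `y`
over tagged partitions of `[a,b]` as the mesh tends to `0`. -/
def IsCurveIntegral (ν : E → Set ℝ → ℝ) (y : ℝ → E) (a b : ℝ) (L : ℝ) : Prop :=
  ∀ ε > 0, ∃ δ > 0, ∀ P : TaggedPartition a b, P.MeshLT δ → |L - RiemannSum ν y P| < ε

/-- A suitable set of moduli of continuity `Θ = {θ_j^{[q₁,q₂]}}`. -/
structure IsSuitableModuli (Θ : ℕ → ℚ → ℚ → ℝ → ℝ) : Prop where
  continuousOn : ∀ (j : ℕ) (q₁ q₂ : ℚ), q₁ < q₂ → ContinuousOn (Θ j q₁ q₂) (Ici 0)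
  monotoneOn : ∀ (j : ℕ) (q₁ q₂ : ℚ), q₁ < q₂ → MonotoneOn (Θ j q₁ q₂) (Ici 0)
  map_zero : ∀ (j : ℕ) (q₁ q₂ : ℚ), q₁ < q₂ → Θ j q₁ q₂ 0 = 0
  nonneg : ∀ (j : ℕ) (q₁ q₂ : ℚ) (x : ℝ), q₁ < q₂ → 0 ≤ x → 0 ≤ Θ j q₁ q₂ x
  mono : ∀ (j₁ j₂ : ℕ) (q₁ q₂ p₁ p₂ : ℚ), j₁ ≤ j₂ → q₁ ≤ p₁ → p₁ < p₂ → p₂ ≤ q₂ →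
    ∀ x : ℝ, 0 ≤ x → Θ j₁ p₁ p₂ x ≤ Θ j₂ q₁ q₂ x

/-- The set `𝒦_j^I` of continuous functions `y : I → E`, `I = [q₁,q₂]`, bounded by `j`
and admitting `θ_j^I` as modulus of continuity. -/
def KSet (E : Type*) [NormedAddCommGroup E] (Θ : ℕ → ℚ → ℚ → ℝ → ℝ)
    (j : ℕ) (q₁ q₂ : ℚ) : Set (ℝ → E) :=
  {y | ContinuousOn y (Set.Icc (q₁ : ℝ) (q₂ : ℝ)) ∧
    (∀ t ∈ Set.Icc (q₁ : ℝ) (q₂ : ℝ), ‖y t‖ ≤ (j : ℝ)) ∧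
    ∀ t₁ ∈ Set.Icc (q₁ : ℝ) (q₂ : ℝ), ∀ t₂ ∈ Set.Icc (q₁ : ℝ) (q₂ : ℝ),
      ‖y t₁ - y t₂‖ ≤ Θ j q₁ q₂ |t₁ - t₂|}

/-- Convergence `ν_n → ν₀` in the topology `σ_Θ` : the integrals along curves of
`𝒦_j^I` converge uniformly, for every `j` and every compact interval `I` with
rational endpoints. -/
def SigmaThetaTendsto {E : Type*} [NormedAddCommGroup E] (Θ : ℕ → ℚ → ℚ → ℝ → ℝ)
    (ν : ℕ → E → Set ℝ → ℝ) (ν₀ : E → Set ℝ → ℝ) : Prop :=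
  ∀ (j : ℕ) (q₁ q₂ : ℚ), q₁ < q₂ → ∀ ε > 0, ∃ n₀ : ℕ, ∀ n ≥ n₀,
    ∀ y ∈ KSet E Θ j q₁ q₂, ∀ L L₀ : ℝ,
      IsCurveIntegral (ν n) y (q₁ : ℝ) (q₂ : ℝ) L →
      IsCurveIntegral ν₀ y (q₁ : ℝ) (q₂ : ℝ) L₀ → |L - L₀| < ε

/-- The time-translate `ν·t` of a parametric b-measure: `(ν·t)_y(A) = ν_y(A + t)`. -/
def BTranslate (ν : E → Set ℝ → ℝ) (t : ℝ) : E → Set ℝ → ℝ :=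
  fun y A => ν y ((fun s => s + t) '' A)

/-- The time-translate `m·t` of a Borel measure: `(m·t)(A) = m(A + t)`. -/
noncomputable def MTranslate (m : Measure ℝ) (t : ℝ) : Measure ℝ :=
  Measure.map (fun s => s - t) m

/-- An N-dimensional parametric b-measure on `E` with common m-bounds `m j` and
common Lipschitz l-bounds `l j`. -/
def IsNDimParamBMeasure {M : ℕ} (νbar : Fin M → E → Set ℝ → ℝ)
    (m l : ℕ → Measure ℝ) : Prop :=
  (∀ i y, IsBMeasure (νbar i y)) ∧
    ∀ j : ℕ, 1 ≤ j → GoodMeasure (m j) ∧ GoodMeasure (l j) ∧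
      (∀ i, ∀ y : E, ‖y‖ ≤ (j : ℝ) → TVLE (νbar i y) (m j)) ∧
      (∀ i, ∀ y₁ y₂ : E, ‖y₁‖ ≤ (j : ℝ) → ‖y₂‖ ≤ (j : ℝ) →
        DiffLE (νbar i y₁) (νbar i y₂) ‖y₁ - y₂‖ (l j))

/-- The oriented curve integral: `∫_b^a := -∫_a^b`. -/
def IsSignedCurveIntegral (ν : E → Set ℝ → ℝ) (y : ℝ → E) (a b : ℝ) (L : ℝ) : Prop :=
  (a ≤ b ∧ IsCurveIntegral ν y a b L) ∨ (b < a ∧ IsCurveIntegral ν y b a (-L))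

/-- `y` is a solution on `S` of the Cauchy problem `y' = ν̄_y`, `y(t₀) = y₀`, for the
N-dimensional parametric b-measure `ν̄`: componentwise,
`y_i(t) = y_{0,i} + ∫_{t₀}^t dν^i_{y(s)}`. -/
def IsSolutionOn {M : ℕ} (νbar : Fin M → EuclideanSpace ℝ (Fin M) → Set ℝ → ℝ)
    (t₀ : ℝ) (y₀ : EuclideanSpace ℝ (Fin M)) (S : Set ℝ)
    (y : ℝ → EuclideanSpace ℝ (Fin M)) : Prop :=
  t₀ ∈ S ∧ y t₀ = y₀ ∧ ContinuousOn y S ∧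
    ∀ t ∈ S, ∀ i : Fin M, IsSignedCurveIntegral (νbar i) y t₀ t (y t i - y₀ i)

/-- `y` is the maximal (noncontinuable) solution, defined on the open interval `S`:
every solution on an interval containing `t₀` is a restriction of `y`. -/
def IsMaximalSolution {M : ℕ} (νbar : Fin M → EuclideanSpace ℝ (Fin M) → Set ℝ → ℝ)
    (t₀ : ℝ) (y₀ : EuclideanSpace ℝ (Fin M)) (S : Set ℝ)
    (y : ℝ → EuclideanSpace ℝ (Fin M)) : Prop :=
  IsSolutionOn νbar t₀ y₀ S y ∧ IsOpen S ∧ S.OrdConnected ∧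
    ∀ S' : Set ℝ, S'.OrdConnected → ∀ z, IsSolutionOn νbar t₀ y₀ S' z →
      S' ⊆ S ∧ Set.EqOn z y S'

/-!
The distribution functions `F_n (y, t)` of the b-measures `ν_n y` are equicontinuous on `E × ℝ`:
the `l`-bounds control the dependence on `y`, the equicontinuous `m`-bounds the dependence on `t`.
A diagonal argument over a countable dense set therefore yields a subsequence converging pointwise
to some `F`. The inequalities `|ν_n y| ≤ m_n` and `|ν_n y₁ - ν_n y₂| ≤ ω ‖y₁ - y₂‖ l_n` say that
increments of distribution functions are dominated, a condition that is stable under pointwise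
limits; the dominating distribution functions themselves need only converge along an ultrafilter,
so the subsequence does not have to be refined for each `j`. The limit of the `m`-bounds is
continuous, and the limit of the `l`-bounds defines a measure which may have atoms, but the atoms
form a countable set, which b-measures do not charge, and can be removed.
-/

open scoped NNReal ENNReal

lemma borel_real_eq_generateFrom_Ioc :
    (inferInstance : MeasurableSpace ℝ) =
      MeasurableSpace.generateFrom {s | ∃ a b, a ≤ b ∧ s = Ioc a b} := by
  simpa only [eq_comm (b := Ioc _ _), BorelSpace.measurable_eq] using
    borel_eq_generateFrom_Ioc_le ℝ

lemma vectorMeasure_ext_of_Ioc {V : Type*} [AddCommGroup V] [TopologicalSpace V] [T2Space V]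
    {σ τ : VectorMeasure ℝ V} (h : ∀ a b, a ≤ b → σ (Ioc a b) = τ (Ioc a b)) : σ = τ := by
  refine VectorMeasure.ext_of_generateFrom _ ?_ borel_real_eq_generateFrom_Ioc
    IsSetSemiring.Ioc.isPiSystem ?_
  · rintro _ ⟨a, b, hab, rfl⟩
    exact h a b hab
  · have hm (n : ℤ) : MeasurableSet (Ioc (n : ℝ) (n + 1)) := measurableSet_Ioc
    rw [← iUnion_Ioc_intCast ℝ, σ.of_disjoint_iUnion hm (pairwise_disjoint_Ioc_intCast ℝ),
      τ.of_disjoint_iUnion hm (pairwise_disjoint_Ioc_intCast ℝ)]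
    exact tsum_congr fun n => h _ _ (by simp)

lemma enorm_vectorMeasure_le_of_Ioc {V : Type*} [NormedAddCommGroup V] [CompleteSpace V]
    {σ : VectorMeasure ℝ V} {m : Measure ℝ} [IsFiniteMeasure m]
    (h : ∀ a b, a ≤ b → ‖σ (Ioc a b)‖ₑ ≤ m (Ioc a b)) (s : Set ℝ) : ‖σ s‖ₑ ≤ m s := by
  have hσ {a b : ℝ} (hab : a ≤ b) :
      AddContent.onIoc (fun t => σ (Iic t)) (Ioc a b) = σ (Ioc a b) := by
    rw [AddContent.onIoc_apply hab, ← Iic_sdiff_Iic,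
      VectorMeasure.of_sdiff measurableSet_Iic measurableSet_Iic (Iic_subset_Iic.2 hab)]
  obtain ⟨τ, hτ, hτm⟩ :=
    VectorMeasure.exists_extension_of_isSetSemiring_of_le_measure_of_generateFrom
      (m := AddContent.onIoc fun t => σ (Iic t)) (μ := m) IsSetSemiring.Ioc
      (by rintro _ ⟨a, b, hab, rfl⟩; rw [hσ hab]; exact h a b hab) borel_real_eq_generateFrom_Ioc
  rw [vectorMeasure_ext_of_Ioc fun a b hab => (hσ hab).symm.trans (hτ _ ⟨a, b, hab, rfl⟩).symm]
  exact hτm s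

section BMeasure

variable {μ ρ : Set ℝ → ℝ} {m : Measure ℝ}

lemma GoodMeasure.isBMeasure_real (hm : GoodMeasure m) : IsBMeasure m.real where
  empty := measureReal_empty
  countably_additive A hA _ hdisj hU := by
    have := hm.1
    have hfin := hU.measure_lt_top (μ := m).ne
    rw [measure_iUnion hdisj hA] at hfin
    simpa only [Measure.real, measure_iUnion hdisj hA, ENNReal.tsum_toReal_eq
      (ENNReal.ne_top_of_tsum_ne_top hfin)] using ENNReal.hasSum_toReal hfin
  singleton t := by simp only [Measure.real, hm.2, ENNReal.toReal_zero]

lemma IsBMeasure.sub (hμ : IsBMeasure μ) (hρ : IsBMeasure ρ) : IsBMeasure (μ - ρ) where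
  empty := by simp only [Pi.sub_apply, hμ.empty, hρ.empty, sub_zero]
  countably_additive A hA bA hdisj hU :=
    (hμ.countably_additive A hA bA hdisj hU).sub (hρ.countably_additive A hA bA hdisj hU)
  singleton t := by simp only [Pi.sub_apply, hμ.singleton, hρ.singleton, sub_zero]

lemma IsBMeasure.exists_signedMeasure (hμ : IsBMeasure μ) {B : Set ℝ} (hB : MeasurableSet B)
    (bB : Bornology.IsBounded B) :
    ∃ σ : SignedMeasure ℝ, ∀ A, MeasurableSet A → σ A = μ (A ∩ B) := by
  classical
  refine ⟨⟨fun A => if MeasurableSet A then μ (A ∩ B) else 0, ?_, fun A hA => if_neg hA, ?_⟩,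
    fun A hA => if_pos hA⟩
  · simp only [MeasurableSet.empty, if_true, empty_inter, hμ.empty]
  · intro A hA hdisj
    simp only [hA, MeasurableSet.iUnion hA, if_true, iUnion_inter]
    exact hμ.countably_additive _ (fun n => (hA n).inter hB)
      (fun n => bB.subset inter_subset_right)
      (fun i j hij => (hdisj hij).mono inter_subset_left inter_subset_left)
      (bB.subset (iUnion_subset fun n => inter_subset_right))

lemma IsBMeasure.union (hμ : IsBMeasure μ) {A B : Set ℝ} (hA : MeasurableSet A)
    (hB : MeasurableSet B) (bA : Bornology.IsBounded A) (bB : Bornology.IsBounded B)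
    (hAB : Disjoint A B) : μ (A ∪ B) = μ A + μ B := by
  obtain ⟨σ, hσ⟩ := hμ.exists_signedMeasure (hA.union hB) (bA.union bB)
  have h := σ.of_union hAB hA hB
  rwa [hσ _ hA, hσ _ hB, hσ _ (hA.union hB), inter_self, inter_eq_left.2 subset_union_left,
    inter_eq_left.2 subset_union_right] at h

lemma IsBMeasure.countable_eq_zero (hμ : IsBMeasure μ) {A : Set ℝ} (hA : A.Countable)
    (bA : Bornology.IsBounded A) : μ A = 0 := by
  obtain ⟨σ, hσ⟩ := hμ.exists_signedMeasure hA.measurableSet bA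
  have hpt : ∀ x : A, σ {(x : ℝ)} = 0 := fun x => by
    rw [hσ _ (measurableSet_singleton _), inter_eq_left.2 (singleton_subset_iff.2 x.2),
      hμ.singleton]
  have h := σ.of_biUnion hA (fun x _ y _ hxy => disjoint_singleton.2 hxy)
    fun x _ => measurableSet_singleton x
  rwa [biUnion_of_singleton, hσ _ hA.measurableSet, inter_self, tsum_congr hpt, tsum_zero] at h

lemma IsBMeasure.sdiff_countable (hμ : IsBMeasure μ) {A D : Set ℝ} (hA : MeasurableSet A)
    (bA : Bornology.IsBounded A) (hD : D.Countable) : μ (A \ D) = μ A := by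
  have h := hμ.union (hA.diff hD.measurableSet) (hA.inter hD.measurableSet)
    (bA.subset sdiff_subset) (bA.subset inter_subset_left) disjoint_sdiff_inter
  rw [sdiff_union_inter, hμ.countable_eq_zero (hD.mono inter_subset_right)
    (bA.subset inter_subset_left), add_zero] at h
  exact h.symm

lemma IsBMeasure.Icc_eq_Ioc (hμ : IsBMeasure μ) (a b : ℝ) : μ (Icc a b) = μ (Ioc a b) := by
  rw [← Icc_sdiff_left,
    hμ.sdiff_countable measurableSet_Icc (Metric.isBounded_Icc a b) (countable_singleton a)]

end BMeasure

section VariationBound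

variable {μ μ₁ μ₂ : Set ℝ → ℝ} {m l : Measure ℝ} {c : ℝ}

lemma tvle_iff_abs_le [IsLocallyFiniteMeasure m] :
    TVLE μ m ↔ ∀ A, Bornology.IsBounded A → MeasurableSet A → |μ A| ≤ m.real A := by
  constructor
  · intro h A bA hA
    simpa using! h A bA hA 1 (fun _ => A) ⟨fun _ => hA, Subsingleton.pairwise, iUnion_const A⟩
  · rintro h A bA - n P ⟨hP, hdisj, rfl⟩
    have bP i : Bornology.IsBounded (P i) := bA.subset (subset_iUnion P i)
    calc ∑ i, |μ (P i)| ≤ ∑ i, m.real (P i) := Finset.sum_le_sum fun i _ => h _ (bP i) (hP i)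
      _ = m.real (⋃ i, P i) :=
        (measureReal_iUnion_fintype hdisj hP fun i => (bP i).measure_lt_top.ne).symm

lemma IsBMeasure.tvle_iff_Ioc (hμ : IsBMeasure μ) [IsLocallyFiniteMeasure m] :
    TVLE μ m ↔ ∀ a b, a ≤ b → |μ (Ioc a b)| ≤ m.real (Ioc a b) := by
  rw [tvle_iff_abs_le]
  refine ⟨fun h a b _ => h _ (Metric.isBounded_Ioc a b) measurableSet_Ioc, fun h A bA hA => ?_⟩
  obtain ⟨r, hr⟩ := bA.subset_ball 0
  have hAr : A ⊆ Ioc (-r) r := fun x hx => by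
    have := abs_lt.1 (mem_ball_zero_iff.1 (hr hx))
    exact ⟨this.1, this.2.le⟩
  obtain ⟨σ, hσ⟩ := hμ.exists_signedMeasure measurableSet_Ioc (Metric.isBounded_Ioc (-r) r)
  have : IsFiniteMeasure (m.restrict (Ioc (-r) r)) :=
    isFiniteMeasure_restrict.2 (Metric.isBounded_Ioc _ _).measure_lt_top.ne
  have hIoc a b : |μ (Ioc a b)| ≤ m.real (Ioc a b) := by
    rcases le_total a b with hab | hab
    · exact h a b hab
    · rw [Ioc_eq_empty hab.not_gt, hμ.empty, abs_zero, measureReal_empty]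
  have hσm : ‖σ A‖ₑ ≤ m.restrict (Ioc (-r) r) A := by
    refine enorm_vectorMeasure_le_of_Ioc (fun a b _ => ?_) A
    rw [hσ _ measurableSet_Ioc, Measure.restrict_apply measurableSet_Ioc, Ioc_inter_Ioc,
      ← ofReal_measureReal (Metric.isBounded_Ioc _ _).measure_lt_top.ne, Real.enorm_eq_ofReal_abs]
    exact ENNReal.ofReal_le_ofReal (hIoc _ _)
  rw [hσ A hA, Measure.restrict_apply hA, inter_eq_left.2 hAr, Real.enorm_eq_ofReal_abs] at hσm
  exact (ENNReal.ofReal_le_iff_le_toReal bA.measure_lt_top.ne).1 hσm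

lemma diffLE_iff_tvle (hc : 0 ≤ c) : DiffLE μ₁ μ₂ c l ↔ TVLE (μ₁ - μ₂) (c.toNNReal • l) := by
  simp only [DiffLE, TVLE, Pi.sub_apply, Measure.smul_apply, ENNReal.toReal_smul, NNReal.smul_def,
    Real.coe_toNNReal c hc, smul_eq_mul]

lemma exists_countable_goodMeasure_restrict_compl (m : Measure ℝ) [IsLocallyFiniteMeasure m] :
    ∃ D : Set ℝ, D.Countable ∧ GoodMeasure (m.restrict Dᶜ) := by
  let D : Set ℝ := {x | 0 < m {x}}
  have hD : D.Countable := Measure.countable_meas_pos_of_disjoint_iUnion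
    (fun x => measurableSet_singleton x) (fun x y hxy => disjoint_singleton.2 hxy)
  refine ⟨D, hD, inferInstance, fun t => ?_⟩
  rw [Measure.restrict_apply (measurableSet_singleton t)]
  by_cases ht : m {t} = 0
  · exact measure_mono_null inter_subset_left ht
  · have htD : t ∈ D := pos_iff_ne_zero.2 ht
    rw [singleton_inter_eq_empty.2 (notMem_compl_iff.2 htD), measure_empty]

lemma IsBMeasure.tvle_restrict_compl (hμ : IsBMeasure μ) [IsLocallyFiniteMeasure m]
    {D : Set ℝ} (hD : D.Countable) (h : TVLE μ m) : TVLE μ (m.restrict Dᶜ) := by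
  rw [tvle_iff_abs_le] at h ⊢
  intro A bA hA
  rw [← hμ.sdiff_countable hA bA hD, measureReal_restrict_apply hA, ← sdiff_eq]
  exact h _ (bA.subset sdiff_subset) (hA.diff hD.measurableSet)

lemma diffLE_restrict_compl (hμ₁ : IsBMeasure μ₁) (hμ₂ : IsBMeasure μ₂) [IsLocallyFiniteMeasure l]
    (hc : 0 ≤ c) {D : Set ℝ} (hD : D.Countable) (h : DiffLE μ₁ μ₂ c l) :
    DiffLE μ₁ μ₂ c (l.restrict Dᶜ) := by
  rw [diffLE_iff_tvle hc, ← Measure.restrict_smul]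
  exact (hμ₁.sub hμ₂).tvle_restrict_compl hD ((diffLE_iff_tvle hc).1 h)

end VariationBound

section Increments

variable {f g : ℝ → ℝ}

/-- The increments of `f` are dominated in absolute value by those of `g`: the analogue for
distribution functions of the inequality `|μ| ≤ m` between a b-measure and a measure. -/
def IncrementsLE (f g : ℝ → ℝ) : Prop :=
  ∀ ⦃s t⦄, s ≤ t → |f t - f s| ≤ g t - g s

lemma IncrementsLE.monotone (h : IncrementsLE f g) : Monotone g :=
  fun _ _ hst => sub_nonneg.1 ((abs_nonneg _).trans (h hst))

lemma IncrementsLE.monotone_add (h : IncrementsLE f g) : Monotone (f + g) := fun s t hst => by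
  have := neg_le_of_abs_le (h hst)
  simp only [Pi.add_apply]
  linarith

lemma IncrementsLE.dist_le (h : IncrementsLE f g) (s t : ℝ) :
    dist (f s) (f t) ≤ dist (g s) (g t) := by
  rw [Real.dist_eq, Real.dist_eq]
  rcases le_total s t with hst | hst
  · rw [abs_sub_comm, abs_sub_comm (g s)]
    exact (h hst).trans (le_abs_self _)
  · exact (h hst).trans (le_abs_self _)

lemma IncrementsLE.continuous (h : IncrementsLE f g) (hg : Continuous g) : Continuous f :=
  continuous_iff_continuousAt.2 fun t => tendsto_iff_dist_tendsto_zero.2 <|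
    squeeze_zero (fun _ => dist_nonneg) (fun s => h.dist_le s t)
      (tendsto_iff_dist_tendsto_zero.1 (hg.tendsto t))

lemma incrementsLE_of_tendsto {ι : Type*} {L : Filter ι} [L.NeBot] {F G : ι → ℝ → ℝ}
    (hF : ∀ t, Tendsto (fun i => F i t) L (𝓝 (f t)))
    (hG : ∀ t, Tendsto (fun i => G i t) L (𝓝 (g t)))
    (h : ∀ᶠ i in L, IncrementsLE (F i) (G i)) : IncrementsLE f g := fun s t hst =>
  le_of_tendsto_of_tendsto ((hF t).sub (hF s)).abs ((hG t).sub (hG s)) <|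
    h.mono fun _ hi => hi hst

lemma IncrementsLE.smul_rightLim {c : ℝ} (h : IncrementsLE f (c • g)) (hf : Continuous f)
    (hg : Monotone g) : IncrementsLE f (c • Function.rightLim g) := by
  have hshift (t : ℝ) : Tendsto (fun e => t + e) (𝓝[>] 0) (𝓝[>] t) := by
    simpa using tendsto_map (f := (t + ·)) (x := 𝓝[>] 0)
  refine incrementsLE_of_tendsto (L := 𝓝[>] 0) (F := fun e t => f (t + e))
    (G := fun e t => c • g (t + e)) (fun t => ?_) (fun t => ?_) (Eventually.of_forall fun e => ?_)
  · exact (hf.tendsto t).comp ((hshift t).mono_right nhdsWithin_le_nhds)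
  · exact ((hg.tendsto_rightLim t).comp (hshift t)).const_smul c
  · exact fun s t hst => h (add_le_add_left hst e)

end Increments

section DistributionFunction

variable {μ μ₁ μ₂ : Set ℝ → ℝ} {m l : Measure ℝ} {f f₁ f₂ g h : ℝ → ℝ} {c : ℝ}

/-- `f` is a distribution function of the set function `μ`. No normalisation is imposed, so
`f` is determined by `μ` up to an additive constant. -/
def IsDistributionFunction (f : ℝ → ℝ) (μ : Set ℝ → ℝ) : Prop :=
  ∀ ⦃s t⦄, s ≤ t → μ (Ioc s t) = f t - f s

/-- The distribution function of a b-measure normalised to vanish at `0`. As for oriented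
integrals, one of the two terms is `μ ∅ = 0`, according to the sign of `t`. -/
def distributionFunction (μ : Set ℝ → ℝ) (t : ℝ) : ℝ :=
  μ (Ioc 0 t) - μ (Ioc t 0)

lemma distributionFunction_zero (μ : Set ℝ → ℝ) : distributionFunction μ 0 = 0 :=
  sub_self _

lemma IsBMeasure.isDistributionFunction (hμ : IsBMeasure μ) :
    IsDistributionFunction (distributionFunction μ) μ := by
  have hadd {a b c : ℝ} (hab : a ≤ b) (hbc : b ≤ c) : μ (Ioc a c) = μ (Ioc a b) + μ (Ioc b c) := by
    rw [← Ioc_union_Ioc_eq_Ioc hab hbc]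
    exact hμ.union measurableSet_Ioc measurableSet_Ioc (Metric.isBounded_Ioc _ _)
      (Metric.isBounded_Ioc _ _) (Ioc_disjoint_Ioc_of_le le_rfl)
  have hempty {a b : ℝ} (hba : b ≤ a) : μ (Ioc a b) = 0 := by rw [Ioc_eq_empty hba.not_gt, hμ.empty]
  intro s t hst
  simp only [distributionFunction]
  rcases le_total 0 s with hs | hs
  · rw [hadd hs hst, hempty hs, hempty (hs.trans hst)]
    ring
  · rcases le_total 0 t with ht | ht
    · rw [hadd hs ht, hempty hs, hempty ht]
      ring
    · rw [hadd hst ht, hempty hs, hempty ht]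
      ring

lemma IsDistributionFunction.sub (h₁ : IsDistributionFunction f₁ μ₁)
    (h₂ : IsDistributionFunction f₂ μ₂) : IsDistributionFunction (f₁ - f₂) (μ₁ - μ₂) :=
  fun s t hst => by simp only [Pi.sub_apply, h₁ hst, h₂ hst]; ring

lemma IsDistributionFunction.measureReal_smul (h : IsDistributionFunction g m.real) (c : ℝ≥0) :
    IsDistributionFunction ((c : ℝ) • g) (c • m).real :=
  fun s t hst => by
    simp only [measureReal_nnreal_smul_apply, Pi.smul_apply, h hst, smul_eq_mul, mul_sub]

lemma isDistributionFunction_stieltjesFunction (g : StieltjesFunction ℝ) :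
    IsDistributionFunction g g.measure.real := fun s t hst => by
  rw [Measure.real, g.measure_Ioc, ENNReal.toReal_ofReal (sub_nonneg.2 (g.mono hst))]

lemma exists_goodMeasure_isDistributionFunction (hg : Monotone g) (hc : Continuous g) :
    ∃ m, GoodMeasure m ∧ IsDistributionFunction g m.real := by
  let G : StieltjesFunction ℝ := ⟨g, hg, fun t => hc.continuousWithinAt⟩
  refine ⟨G.measure, ⟨inferInstance, fun t => ?_⟩, isDistributionFunction_stieltjesFunction G⟩
  have hleft : Function.leftLim G t = G t := hc.continuousAt.continuousWithinAt.leftLim_eq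
  rw [G.measure_singleton, hleft, sub_self, ENNReal.ofReal_zero]

lemma exists_isBMeasure_isDistributionFunction (h : IncrementsLE f g) (hg : Continuous g) :
    ∃ μ, IsBMeasure μ ∧ IsDistributionFunction f μ := by
  obtain ⟨m₁, hm₁, hfg⟩ :=
    exists_goodMeasure_isDistributionFunction h.monotone_add ((h.continuous hg).add hg)
  obtain ⟨m₂, hm₂, hg⟩ := exists_goodMeasure_isDistributionFunction h.monotone hg
  refine ⟨m₁.real - m₂.real, hm₁.isBMeasure_real.sub hm₂.isBMeasure_real, ?_⟩
  simpa using hfg.sub hg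

lemma IsBMeasure.tvle_iff_incrementsLE (hμ : IsBMeasure μ) [IsLocallyFiniteMeasure m]
    (hf : IsDistributionFunction f μ) (hg : IsDistributionFunction g m.real) :
    TVLE μ m ↔ IncrementsLE f g := by
  rw [hμ.tvle_iff_Ioc]
  exact forall₂_congr fun s t => forall_congr' fun hst => by rw [hf hst, hg hst]

lemma diffLE_iff_incrementsLE (hμ₁ : IsBMeasure μ₁) (hμ₂ : IsBMeasure μ₂)
    [IsLocallyFiniteMeasure l] (hc : 0 ≤ c) (hf₁ : IsDistributionFunction f₁ μ₁)
    (hf₂ : IsDistributionFunction f₂ μ₂) (hh : IsDistributionFunction h l.real) :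
    DiffLE μ₁ μ₂ c l ↔ IncrementsLE (f₁ - f₂) (c • h) := by
  lift c to ℝ≥0 using hc
  rw [diffLE_iff_tvle c.coe_nonneg, Real.toNNReal_coe,
    (hμ₁.sub hμ₂).tvle_iff_incrementsLE (hf₁.sub hf₂) (hh.measureReal_smul c)]

end DistributionFunction

section Compactness

variable {ι X α : Type*} [PseudoMetricSpace α]

lemma cauchySeq_of_equicontinuousAt_of_mem_closure [TopologicalSpace X] {F : ℕ → X → α}
    {S : Set X} {x : X} (hF : EquicontinuousAt F x) (hx : x ∈ closure S)
    (hS : ∀ y ∈ S, CauchySeq fun n => F n y) : CauchySeq fun n => F n x := by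
  rw [Metric.equicontinuousAt_iff_right] at hF
  refine Metric.cauchySeq_iff'.2 fun ε hε => ?_
  obtain ⟨y, hy, hyS⟩ := mem_closure_iff_nhds.1 hx _ (hF (ε / 3) (by positivity))
  obtain ⟨N, hN⟩ := Metric.cauchySeq_iff'.1 (hS y hyS) (ε / 3) (by positivity)
  refine ⟨N, fun n hn => ?_⟩
  calc dist (F n x) (F N x)
      ≤ dist (F n x) (F n y) + dist (F n y) (F N y) + dist (F N y) (F N x) := dist_triangle4 _ _ _ _
    _ < ε / 3 + ε / 3 + ε / 3 :=
      add_lt_add (add_lt_add (hy n) (hN n hn)) ((dist_comm _ _).trans_lt (hy N))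
    _ = ε := by ring

variable [ProperSpace α]

lemma exists_tendsto_ultrafilter_of_isBounded (L : Ultrafilter ι) {F : ι → X → α}
    (hF : ∀ x, Bornology.IsBounded (range fun i => F i x)) :
    ∃ f : X → α, ∀ x, Tendsto (fun i => F i x) L (𝓝 (f x)) := by
  choose f _ hf using fun x => (hF x).isCompact_closure.ultrafilter_le_nhds' (L.map (F · x))
    (Ultrafilter.mem_map.2 <| univ_mem' fun i => subset_closure (mem_range_self i))
  exact ⟨f, hf⟩

lemma exists_subseq_cauchySeq_of_isBounded [Countable X] {F : ℕ → X → α}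
    (hF : ∀ x, Bornology.IsBounded (range fun n => F n x)) :
    ∃ φ : ℕ → ℕ, StrictMono φ ∧ ∀ x, CauchySeq fun k => F (φ k) x := by
  obtain ⟨f, -, φ, hφ, hf⟩ := (isCompact_univ_pi fun x => (hF x).isCompact_closure).tendsto_subseq
    (x := F) fun n x _ => subset_closure (mem_range_self n)
  exact ⟨φ, hφ, fun x => (tendsto_pi_nhds.1 hf x).cauchySeq⟩

lemma exists_subseq_tendsto_of_equicontinuous [TopologicalSpace X]
    [TopologicalSpace.SeparableSpace X] {F : ℕ → X → α} (hF : Equicontinuous F)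
    (hb : ∀ x, Bornology.IsBounded (range fun n => F n x)) :
    ∃ φ : ℕ → ℕ, StrictMono φ ∧ ∃ f : X → α,
      ∀ x, Tendsto (fun k => F (φ k) x) atTop (𝓝 (f x)) := by
  obtain ⟨S, hSc, hSd⟩ := TopologicalSpace.exists_countable_dense X
  have := hSc.to_subtype
  obtain ⟨φ, hφ, hS⟩ := exists_subseq_cauchySeq_of_isBounded
    (F := fun n (x : S) => F n x) fun x => hb x
  have hcauchy (x : X) : CauchySeq fun k => F (φ k) x :=
    cauchySeq_of_equicontinuousAt_of_mem_closure (hF.comp φ x) (hSd x) fun y hy => hS ⟨y, hy⟩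
  choose f hf using fun x => cauchySeq_tendsto_of_complete (hcauchy x)
  exact ⟨φ, hφ, f, hf⟩

end Compactness

section MeasureFamily

variable {ι X : Type*} [TopologicalSpace X] [MeasurableSpace X]

/-- A family of measures that is equicontinuous in the sense that every point has neighbourhoods
of uniformly small mass. -/
def IsEquicontinuousFamily (m : ι → Measure X) : Prop :=
  ∀ x, ∀ ε > (0 : ℝ≥0), ∃ U ∈ 𝓝 x, ∀ i, m i U ≤ ε

/-- A family of measures that is locally bounded: every point has a neighbourhood of uniformly
bounded mass. -/
def IsLocallyBoundedFamily (m : ι → Measure X) : Prop :=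
  ∀ x, ∃ U ∈ 𝓝 x, ∃ C : ℝ≥0, ∀ i, m i U ≤ C

lemma IsEquicontinuousFamily.comp {κ : Type*} {m : ι → Measure X}
    (h : IsEquicontinuousFamily m) (φ : κ → ι) : IsEquicontinuousFamily (m ∘ φ) := fun x ε hε =>
  let ⟨U, hU, hm⟩ := h x ε hε
  ⟨U, hU, fun k => hm (φ k)⟩

lemma IsLocallyBoundedFamily.comp {κ : Type*} {m : ι → Measure X}
    (h : IsLocallyBoundedFamily m) (φ : κ → ι) : IsLocallyBoundedFamily (m ∘ φ) := fun x =>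
  let ⟨U, hU, C, hm⟩ := h x
  ⟨U, hU, C, fun k => hm (φ k)⟩

lemma IsEquicontinuousFamily.isLocallyBoundedFamily {m : ι → Measure X}
    (h : IsEquicontinuousFamily m) : IsLocallyBoundedFamily m := fun x =>
  let ⟨U, hU, hm⟩ := h x 1 one_pos
  ⟨U, hU, 1, hm⟩

lemma IsLocallyBoundedFamily.exists_forall_le {m : ι → Measure X} (h : IsLocallyBoundedFamily m)
    {K : Set X} (hK : IsCompact K) : ∃ C : ℝ≥0, ∀ i, m i K ≤ C := by
  refine hK.induction_on ⟨0, fun i => ?_⟩ ?_ ?_ fun x _ => ?_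
  · rw [measure_empty]
    exact zero_le
  · exact fun s t hst ⟨C, hC⟩ => ⟨C, fun i => (measure_mono hst).trans (hC i)⟩
  · rintro s t ⟨C, hC⟩ ⟨C', hC'⟩
    exact ⟨C + C', fun i => (measure_union_le s t).trans (add_le_add (hC i) (hC' i))⟩
  · obtain ⟨U, hU, hC⟩ := h x
    exact ⟨U, mem_nhdsWithin_of_mem_nhds hU, hC⟩

lemma isEquicontinuousFamily_of_forall_Icc {m : ι → Measure ℝ}
    (h : ∀ ε > (0 : ℝ), ∃ δ > (0 : ℝ), ∀ i, ∀ s t : ℝ, 0 ≤ t - s → t - s < δ →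
      m i (Icc s t) < ENNReal.ofReal ε) : IsEquicontinuousFamily m := fun x ε hε => by
  obtain ⟨δ, hδ, hm⟩ := h ε hε
  refine ⟨Icc (x - δ / 3) (x + δ / 3), Icc_mem_nhds (by linarith) (by linarith), fun i => ?_⟩
  exact (hm i _ _ (by linarith) (by linarith)).le.trans_eq ENNReal.ofReal_coe_nnreal

lemma isLocallyBoundedFamily_of_forall_Icc {m : ι → Measure ℝ} {c : ℝ}
    (h : ∀ i, ∀ t : ℝ, m i (Icc t (t + 1)) ≤ ENNReal.ofReal c) : IsLocallyBoundedFamily m :=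
  fun x => ⟨Icc (x - 1 / 2) (x - 1 / 2 + 1), Icc_mem_nhds (by linarith) (by linarith),
    c.toNNReal, fun i => h i _⟩

variable {m : ι → Measure ℝ}

lemma IsDistributionFunction.dist_eq {μ : Measure ℝ} {g : ℝ → ℝ}
    (hg : IsDistributionFunction g μ.real) (s t : ℝ) : dist (g s) (g t) = μ.real (uIoc s t) := by
  rcases le_total s t with hst | hst
  · rw [uIoc_of_le hst, hg hst, dist_comm, Real.dist_eq, abs_of_nonneg]
    exact hg hst ▸ measureReal_nonneg
  · rw [uIoc_of_ge hst, hg hst, Real.dist_eq, abs_of_nonneg]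
    exact hg hst ▸ measureReal_nonneg

lemma equicontinuous_of_isEquicontinuousFamily {g : ι → ℝ → ℝ} (hm : IsEquicontinuousFamily m)
    (hg : ∀ i, IsDistributionFunction (g i) (m i).real) : Equicontinuous g := fun t => by
  refine Metric.equicontinuousAt_iff_right.2 fun ε hε => ?_
  lift ε to ℝ≥0 using hε.le
  obtain ⟨U, hU, hmU⟩ := hm t (ε / 2) (half_pos (mod_cast hε))
  obtain ⟨r, hr, hrU⟩ := Metric.mem_nhds_iff.1 hU
  filter_upwards [Metric.ball_mem_nhds t hr] with s hs i
  have hsub : uIoc t s ⊆ U := uIoc_subset_uIcc.trans <|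
    ((convex_ball t r).ordConnected.uIcc_subset (Metric.mem_ball_self hr) hs).trans hrU
  rw [(hg i).dist_eq]
  calc (m i).real (uIoc t s) ≤ (ε / 2 : ℝ≥0) :=
        ENNReal.toReal_le_coe_of_le_coe ((measure_mono hsub).trans (hmU i))
    _ < ε := mod_cast NNReal.half_lt_self (mod_cast hε.ne')

lemma IsLocallyBoundedFamily.exists_abs_distributionFunction_le (h : IsLocallyBoundedFamily m)
    (hm : ∀ i, GoodMeasure (m i)) (t : ℝ) :
    ∃ C, ∀ i, |distributionFunction (m i).real t| ≤ C := by
  obtain ⟨C, hC⟩ := h.exists_forall_le (isCompact_uIcc (a := 0) (b := t))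
  refine ⟨C, fun i => ?_⟩
  have hdist := (hm i).isBMeasure_real.isDistributionFunction.dist_eq 0 t
  rw [distributionFunction_zero, dist_zero_left, Real.norm_eq_abs] at hdist
  rw [hdist]
  exact ENNReal.toReal_le_coe_of_le_coe ((measure_mono uIoc_subset_uIcc).trans (hC i))

end MeasureFamily

section Parametric

variable {ν μ : E → Set ℝ → ℝ} {F : E → ℝ → ℝ} {ω : ℝ → ℝ} {j : ℕ} {m l : Measure ℝ}
  {g h : ℝ → ℝ}

lemma HasMBound.incrementsLE (hm : HasMBound ν j m) {y : E} (hν : IsBMeasure (ν y))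
    (hy : ‖y‖ ≤ j) :
    IncrementsLE (distributionFunction (ν y)) (distributionFunction m.real) :=
  have := hm.1.1
  (hν.tvle_iff_incrementsLE hν.isDistributionFunction
    hm.1.isBMeasure_real.isDistributionFunction).1 (hm.2 y hy)

lemma HasLBound.incrementsLE (hl : HasLBound ω ν j l) {y₁ y₂ : E} (hν₁ : IsBMeasure (ν y₁))
    (hν₂ : IsBMeasure (ν y₂)) (hω : 0 ≤ ω ‖y₁ - y₂‖) (hy₁ : ‖y₁‖ ≤ j) (hy₂ : ‖y₂‖ ≤ j) :
    IncrementsLE (distributionFunction (ν y₁) - distributionFunction (ν y₂))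
      (ω ‖y₁ - y₂‖ • distributionFunction l.real) :=
  have := hl.1.1
  (diffLE_iff_incrementsLE hν₁ hν₂ hω hν₁.isDistributionFunction hν₂.isDistributionFunction
    hl.1.isBMeasure_real.isDistributionFunction).1 (hl.2 y₁ y₂ hy₁ hy₂)

lemma HasLBound.dist_distributionFunction_le (hl : HasLBound ω ν j l) {y₁ y₂ : E}
    (hν₁ : IsBMeasure (ν y₁)) (hν₂ : IsBMeasure (ν y₂)) (hω : 0 ≤ ω ‖y₁ - y₂‖)
    (hy₁ : ‖y₁‖ ≤ j) (hy₂ : ‖y₂‖ ≤ j) (t : ℝ) :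
    dist (distributionFunction (ν y₁) t) (distributionFunction (ν y₂) t) ≤
      ω ‖y₁ - y₂‖ * |distributionFunction l.real t| := by
  simpa [distributionFunction_zero, Real.dist_eq, abs_mul, abs_of_nonneg hω] using
    (hl.incrementsLE hν₁ hν₂ hω hy₁ hy₂).dist_le t 0

lemma exists_hasMBound (hμ : ∀ y, IsBMeasure (μ y)) (hF : ∀ y, IsDistributionFunction (F y) (μ y))
    (hg : Continuous g) (hFg : ∀ y, ‖y‖ ≤ j → IncrementsLE (F y) g) : ∃ m, HasMBound μ j m := by
  have hmono : Monotone g := (hFg 0 (by simp)).monotone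
  obtain ⟨m, hm, hgm⟩ := exists_goodMeasure_isDistributionFunction hmono hg
  have := hm.1
  exact ⟨m, hm, fun y hy => ((hμ y).tvle_iff_incrementsLE (hF y) hgm).2 (hFg y hy)⟩

lemma exists_hasLBound (hω : ∀ x, 0 ≤ x → 0 ≤ ω x) (hμ : ∀ y, IsBMeasure (μ y))
    (hF : ∀ y, IsDistributionFunction (F y) (μ y)) (hFc : ∀ y, Continuous (F y))
    (hh : Monotone h) (hFh : ∀ y₁ y₂, ‖y₁‖ ≤ j → ‖y₂‖ ≤ j →
      IncrementsLE (F y₁ - F y₂) (ω ‖y₁ - y₂‖ • h)) : ∃ l, HasLBound ω μ j l := by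
  let H := hh.stieltjesFunction
  obtain ⟨D, hD, hl⟩ := exists_countable_goodMeasure_restrict_compl H.measure
  refine ⟨_, hl, fun y₁ y₂ hy₁ hy₂ => ?_⟩
  have hω' := hω _ (norm_nonneg (y₁ - y₂))
  refine diffLE_restrict_compl (hμ y₁) (hμ y₂) hω' hD ?_
  exact (diffLE_iff_incrementsLE (hμ y₁) (hμ y₂) hω' (hF y₁) (hF y₂)
    (isDistributionFunction_stieltjesFunction H)).2
    ((hFh y₁ y₂ hy₁ hy₂).smul_rightLim ((hFc y₁).sub (hFc y₂)) hh)

end Parametric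

section Limit

variable {ι : Type*} {ν : ι → E → Set ℝ → ℝ} {m l : ι → Measure ℝ} {F : E → ℝ → ℝ} {ω : ℝ → ℝ}
  {j : ℕ}

lemma equicontinuousAt_distributionFunction_apply (hω : Tendsto ω (𝓝[≥] 0) (𝓝 0))
    (hω₀ : ∀ x, 0 ≤ x → 0 ≤ ω x) (hν : ∀ i y, IsBMeasure (ν i y))
    (hl : ∀ i, HasLBound ω (ν i) j (l i)) (hlbd : IsLocallyBoundedFamily l) {y : E} (hy : ‖y‖ < j)
    (t : ℝ) : EquicontinuousAt (fun i y' => distributionFunction (ν i y') t) y := by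
  obtain ⟨C, hC⟩ := hlbd.exists_abs_distributionFunction_le (fun i => (hl i).1) t
  refine Metric.equicontinuousAt_of_continuity_modulus (fun y' => ω ‖y - y'‖ * C) ?_ _ ?_
  · have hcont : Continuous fun y' => ‖y - y'‖ := by fun_prop
    have hnorm : Tendsto (fun y' => ‖y - y'‖) (𝓝 y) (𝓝[≥] 0) :=
      tendsto_nhdsWithin_iff.2
        ⟨by simpa using hcont.tendsto y, Eventually.of_forall fun y' => norm_nonneg _⟩
    simpa using (hω.comp hnorm).mul_const C
  · filter_upwards [(continuous_norm.tendsto y).eventually_le_const hy] with y' hy' i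
    have hω' := hω₀ _ (norm_nonneg (y - y'))
    exact ((hl i).dist_distributionFunction_le (hν i y) (hν i y') hω' hy.le hy' t).trans
      (mul_le_mul_of_nonneg_left (hC i) hω')

lemma equicontinuousAt_distributionFunction (hω : Tendsto ω (𝓝[≥] 0) (𝓝 0))
    (hω₀ : ∀ x, 0 ≤ x → 0 ≤ ω x) (hν : ∀ i y, IsBMeasure (ν i y))
    (hm : ∀ i, HasMBound (ν i) j (m i)) (hl : ∀ i, HasLBound ω (ν i) j (l i))
    (hmeq : IsEquicontinuousFamily m) (hlbd : IsLocallyBoundedFamily l) {y : E} (hy : ‖y‖ < j)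
    (t : ℝ) :
    EquicontinuousAt (fun i (p : E × ℝ) => distributionFunction (ν i p.1) p.2) (y, t) := by
  have hspace := equicontinuousAt_distributionFunction_apply hω hω₀ hν hl hlbd hy t
  have htime : EquicontinuousAt (fun i => distributionFunction (m i).real) t :=
    equicontinuous_of_isEquicontinuousFamily hmeq
      (fun i => (hm i).1.isBMeasure_real.isDistributionFunction) t
  have hball : ∀ᶠ y' in 𝓝 y, ‖y'‖ ≤ j := (continuous_norm.tendsto y).eventually_le_const hy
  rw [Metric.equicontinuousAt_iff_right] at hspace htime ⊢
  intro ε hε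
  rw [nhds_prod_eq]
  filter_upwards [(hball.and (hspace (ε / 2) (half_pos hε))).prod_mk (htime (ε / 2) (half_pos hε))]
    with p ⟨⟨hp, hpy⟩, hpt⟩ i
  calc dist (distributionFunction (ν i y) t) (distributionFunction (ν i p.1) p.2)
      ≤ dist (distributionFunction (ν i y) t) (distributionFunction (ν i p.1) t) +
        dist (distributionFunction (ν i p.1) t) (distributionFunction (ν i p.1) p.2) :=
        dist_triangle _ _ _
    _ < ε / 2 + ε / 2 := add_lt_add (hpy i)
        ((((hm i).incrementsLE (hν i p.1) hp).dist_le t p.2).trans_lt (hpt i))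
    _ = ε := add_halves ε

lemma isBounded_range_distributionFunction (hν : ∀ i y, IsBMeasure (ν i y))
    (hm : ∀ i, HasMBound (ν i) j (m i)) (hmbd : IsLocallyBoundedFamily m) {y : E} (hy : ‖y‖ ≤ j)
    (t : ℝ) : Bornology.IsBounded (range fun i => distributionFunction (ν i y) t) := by
  obtain ⟨C, hC⟩ := hmbd.exists_abs_distributionFunction_le (fun i => (hm i).1) t
  refine isBounded_iff_forall_norm_le.2 ⟨C, forall_mem_range.2 fun i => ?_⟩
  have hdist := ((hm i).incrementsLE (hν i y) hy).dist_le t 0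
  simp only [distributionFunction_zero, dist_zero_right, Real.norm_eq_abs] at hdist ⊢
  exact hdist.trans (hC i)

lemma IsLocallyBoundedFamily.exists_tendsto_distributionFunction (hm : IsLocallyBoundedFamily m)
    (hgood : ∀ i, GoodMeasure (m i)) (L : Ultrafilter ι) :
    ∃ g : ℝ → ℝ, ∀ t, Tendsto (fun i => distributionFunction (m i).real t) L (𝓝 (g t)) :=
  exists_tendsto_ultrafilter_of_isBounded L fun t =>
    let ⟨C, hC⟩ := hm.exists_abs_distributionFunction_le hgood t
    isBounded_iff_forall_norm_le.2 ⟨C, forall_mem_range.2 hC⟩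

variable {L : Filter ι} [L.NeBot]

lemma exists_continuous_incrementsLE (hν : ∀ i y, IsBMeasure (ν i y))
    (hm : ∀ i, HasMBound (ν i) j (m i)) (hmeq : IsEquicontinuousFamily m)
    (hF : ∀ y t, Tendsto (fun i => distributionFunction (ν i y) t) L (𝓝 (F y t))) :
    ∃ g, Continuous g ∧ ∀ y, ‖y‖ ≤ j → IncrementsLE (F y) g := by
  obtain ⟨g, hg⟩ := hmeq.isLocallyBoundedFamily.exists_tendsto_distributionFunction
    (fun i => (hm i).1) (Ultrafilter.of L)
  refine ⟨g, ?_, fun y hy => ?_⟩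
  · exact (tendsto_pi_nhds.2 hg).continuous_of_equicontinuous <|
      equicontinuous_of_isEquicontinuousFamily hmeq
        fun i => (hm i).1.isBMeasure_real.isDistributionFunction
  · exact incrementsLE_of_tendsto (fun t => (hF y t).mono_left (Ultrafilter.of_le L)) hg
      (Eventually.of_forall fun i => (hm i).incrementsLE (hν i y) hy)

lemma exists_monotone_incrementsLE (hω₀ : ∀ x, 0 ≤ x → 0 ≤ ω x) (hν : ∀ i y, IsBMeasure (ν i y))
    (hl : ∀ i, HasLBound ω (ν i) j (l i)) (hlbd : IsLocallyBoundedFamily l)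
    (hF : ∀ y t, Tendsto (fun i => distributionFunction (ν i y) t) L (𝓝 (F y t))) :
    ∃ h, Monotone h ∧ ∀ y₁ y₂, ‖y₁‖ ≤ j → ‖y₂‖ ≤ j →
      IncrementsLE (F y₁ - F y₂) (ω ‖y₁ - y₂‖ • h) := by
  obtain ⟨h, hh⟩ :=
    hlbd.exists_tendsto_distributionFunction (fun i => (hl i).1) (Ultrafilter.of L)
  refine ⟨h, fun s t hst => ?_, fun y₁ y₂ hy₁ hy₂ => ?_⟩
  · refine le_of_tendsto_of_tendsto (hh s) (hh t) (Eventually.of_forall fun i => sub_nonneg.1 ?_)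
    rw [← (hl i).1.isBMeasure_real.isDistributionFunction hst]
    exact measureReal_nonneg
  · have hF' y t := (hF y t).mono_left (Ultrafilter.of_le L)
    exact incrementsLE_of_tendsto (fun t => (hF' y₁ t).sub (hF' y₂ t))
      (fun t => (hh t).const_mul _) (Eventually.of_forall fun i =>
        (hl i).incrementsLE (hν i y₁) (hν i y₂) (hω₀ _ (norm_nonneg _)) hy₁ hy₂)

end Limit

section ParamLimit

variable {ω : ℕ → ℝ → ℝ}

lemma exists_one_le_norm_lt (y : E) : ∃ j : ℕ, 1 ≤ j ∧ ‖y‖ < j :=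
  ⟨⌈‖y‖⌉₊ + 1, Nat.le_add_left 1 _, (Nat.le_ceil _).trans_lt (by simp)⟩

lemma IsModulusFamily.tendsto_zero (hω : IsModulusFamily ω) (j : ℕ) :
    Tendsto (ω j) (𝓝[≥] 0) (𝓝 0) := by
  simpa only [hω.map_zero] using (hω.continuousOn j 0 self_mem_Ici).tendsto

lemma exists_isParamBMeasure_isDistributionFunction {ι : Type*} {L : Filter ι} [L.NeBot]
    (hω : IsModulusFamily ω) {ν : ι → E → Set ℝ → ℝ} {mB lB : ι → ℕ → Measure ℝ}
    (hν : ∀ i y, IsBMeasure (ν i y)) (hmB : ∀ i j, 1 ≤ j → HasMBound (ν i) j (mB i j))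
    (hlB : ∀ i j, 1 ≤ j → HasLBound (ω j) (ν i) j (lB i j))
    (hmeq : ∀ j, 1 ≤ j → IsEquicontinuousFamily fun i => mB i j)
    (hlbd : ∀ j, 1 ≤ j → IsLocallyBoundedFamily fun i => lB i j) {F : E → ℝ → ℝ}
    (hF : ∀ y t, Tendsto (fun i => distributionFunction (ν i y) t) L (𝓝 (F y t))) :
    ∃ μ, IsParamBMeasure ω μ ∧ ∀ y, IsDistributionFunction (F y) (μ y) := by
  have hg j (hj : 1 ≤ j) := exists_continuous_incrementsLE hν (hmB · j hj) (hmeq j hj) hF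
  have hh j (hj : 1 ≤ j) :=
    exists_monotone_incrementsLE (hω.nonneg j) hν (hlB · j hj) (hlbd j hj) hF
  have hFg y : ∃ g, Continuous g ∧ IncrementsLE (F y) g := by
    obtain ⟨j, hj, hy⟩ := exists_one_le_norm_lt y
    obtain ⟨g, hgc, hFg⟩ := hg j hj
    exact ⟨g, hgc, hFg y hy.le⟩
  choose g hgc hFg using hFg
  choose μ hμ hFμ using fun y => exists_isBMeasure_isDistributionFunction (hFg y) (hgc y)
  refine ⟨μ, ⟨hμ, fun j hj => ?_⟩, hFμ⟩
  obtain ⟨G, hGc, hFG⟩ := hg j hj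
  obtain ⟨H, hH, hFH⟩ := hh j hj
  obtain ⟨m, hm⟩ := exists_hasMBound hμ hFμ hGc hFG
  obtain ⟨l, hl⟩ :=
    exists_hasLBound (hω.nonneg j) hμ hFμ (fun y => (hFg y).continuous (hgc y)) hH hFH
  exact ⟨m, l, hm, hl⟩

lemma IsDistributionFunction.tendsto_Icc {ι : Type*} {L : Filter ι} {ρ : ι → Set ℝ → ℝ}
    {μ : Set ℝ → ℝ} {f : ℝ → ℝ} (hf : IsDistributionFunction f μ) (hμ : IsBMeasure μ)
    (hρ : ∀ i, IsBMeasure (ρ i))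
    (h : ∀ t, Tendsto (fun i => distributionFunction (ρ i) t) L (𝓝 (f t))) {a b : ℝ}
    (hab : a ≤ b) : Tendsto (fun i => ρ i (Icc a b)) L (𝓝 (μ (Icc a b))) := by
  simp only [(hρ _).Icc_eq_Ioc, hμ.Icc_eq_Ioc, hf hab, (hρ _).isDistributionFunction hab]
  exact (h b).sub (h a)

theorem stmt11_general [TopologicalSpace.SeparableSpace E] (hω : IsModulusFamily ω)
    {ν : ℕ → E → Set ℝ → ℝ} (hν : ∀ n y, IsBMeasure (ν n y)) {mB lB : ℕ → ℕ → Measure ℝ}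
    (hmB : ∀ n j, 1 ≤ j → HasMBound (ν n) j (mB n j))
    (hlB : ∀ n j, 1 ≤ j → HasLBound (ω j) (ν n) j (lB n j))
    (hmeq : ∀ j, 1 ≤ j → IsEquicontinuousFamily fun n => mB n j)
    (hlbd : ∀ j, 1 ≤ j → IsLocallyBoundedFamily fun n => lB n j) :
    ∃ φ : ℕ → ℕ, StrictMono φ ∧ ∃ μ : E → Set ℝ → ℝ, IsParamBMeasure ω μ ∧
      ∀ y a b, a ≤ b → Tendsto (fun k => ν (φ k) y (Icc a b)) atTop (𝓝 (μ y (Icc a b))) := by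
  have hequi : Equicontinuous fun n (p : E × ℝ) => distributionFunction (ν n p.1) p.2 := by
    rintro ⟨y, t⟩
    obtain ⟨j, hj, hy⟩ := exists_one_le_norm_lt y
    exact equicontinuousAt_distributionFunction (hω.tendsto_zero j) (hω.nonneg j) hν (hmB · j hj)
      (hlB · j hj) (hmeq j hj) (hlbd j hj) hy t
  obtain ⟨φ, hφ, F, hF⟩ := exists_subseq_tendsto_of_equicontinuous hequi fun ⟨y, t⟩ => by
    obtain ⟨j, hj, hy⟩ := exists_one_le_norm_lt y
    exact isBounded_range_distributionFunction hν (hmB · j hj) (hmeq j hj).isLocallyBoundedFamily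
      hy.le t
  obtain ⟨μ, hμ, hFμ⟩ := exists_isParamBMeasure_isDistributionFunction (ν := ν ∘ φ)
    (mB := mB ∘ φ) (lB := lB ∘ φ) (F := fun y t => F (y, t)) hω (fun k => hν (φ k))
    (fun k => hmB (φ k)) (fun k => hlB (φ k)) (fun j hj => (hmeq j hj).comp φ)
    (fun j hj => (hlbd j hj).comp φ) fun y t => hF (y, t)
  exact ⟨φ, hφ, μ, hμ, fun y a b hab =>
    (hFμ y).tendsto_Icc (hμ.1 y) (fun k => hν (φ k) y) (fun t => hF (y, t)) hab⟩

end ParamLimit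

theorem stmt11 {N : ℕ} (ω : ℕ → ℝ → ℝ) (hω : IsModulusFamily ω)
    (ν : ℕ → EuclideanSpace ℝ (Fin N) → Set ℝ → ℝ)
    (hν : ∀ n, IsParamBMeasure ω (ν n))
    (mB lB : ℕ → ℕ → Measure ℝ)
    (hmB : ∀ n j, 1 ≤ j → HasMBound (ν n) j (mB n j))
    (hlB : ∀ n j, 1 ≤ j → HasLBound (ω j) (ν n) j (lB n j))
    (hmeq : ∀ j, 1 ≤ j → ∀ ε > (0 : ℝ), ∃ δ > (0 : ℝ), ∀ n, ∀ s t : ℝ,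
      0 ≤ t - s → t - s < δ → mB n j (Set.Icc s t) < ENNReal.ofReal ε)
    (hlbd : ∀ j, 1 ≤ j → ∃ c > (0 : ℝ), ∀ n, ∀ t : ℝ,
      lB n j (Set.Icc t (t + 1)) ≤ ENNReal.ofReal c) :
    ∃ φ : ℕ → ℕ, StrictMono φ ∧
      ∃ μ : EuclideanSpace ℝ (Fin N) → Set ℝ → ℝ, IsParamBMeasure ω μ ∧
        ∀ y : EuclideanSpace ℝ (Fin N), ∀ a b : ℝ, a ≤ b →
          Tendsto (fun k => ν (φ k) y (Set.Icc a b)) atTop (𝓝 (μ y (Set.Icc a b))) :=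
  stmt11_general hω (fun n => (hν n).1) hmB hlB
    (fun j hj => isEquicontinuousFamily_of_forall_Icc (hmeq j hj))
    fun j hj => (hlbd j hj).elim fun _ hc => isLocallyBoundedFamily_of_forall_Icc hc.2
end

section
/- Let ν̄ = (ν¹,…,ν^N) be an N-dimensional parametric b-measure on ℝ^N with common m-bounds {m_j}_{j≥1} and common Lipschitz l-bounds {l_j}_{j≥1}, and let (t₀, y₀) ∈ ℝ × ℝ^N. Then there exists δ > 0 such that there is a unique continuous function y : [t₀−δ, t₀+δ] → ℝ^N satisfying, for each t ∈ [t₀−δ, t₀+δ] and each component i = 1,…,N, y_i(t) = y_{0,i} + ∫_{t₀}^t dν^i_{y(s)}. -/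
open MeasureTheory Set Filter Topology

variable {E : Type*} [NormedAddCommGroup E]

/-!
Along a simple curve the integral of `ν` is an honest signed measure, glued from the `ν x` over the
fibres. Approximating a continuous curve `y` uniformly by simple curves, the Lipschitz `l`-bound
makes these measures Cauchy with error relative to `l`; the limit is an additive set function that
is `ε l`-close to `ν (y τ)` on short intervals around `τ`, so its distribution function is a
primitive: its increments are the curve integrals along `y`.

Since `m` and `l` have no atoms, `N m(I)` and `N l(I)` are small on a short interval `I` around
`t₀`. On the curves within `r` of the constant `y₀`, the Picard operator is then a self-map (by the
`m`-bound) and a contraction (by the `l`-bound). A solution that is not assumed to stay within `r`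
of `y₀` cannot leave: while it has not, the `m`-bound keeps it at distance at most `N m(I) < r`.
-/

section CurveMeasure

variable {α X F : Type*} [MeasurableSpace α] [NormedAddCommGroup F]

/-- The measure "`∫ dσ_{f(s)}`" along a simple curve `f`: it agrees with `σ x` on the fibre of `f`
over `x`. -/
noncomputable def simpleCurveMeasure (σ : X → VectorMeasure α F) (f : SimpleFunc α X) :
    VectorMeasure α F :=
  ∑ x ∈ f.range, (σ x).restrict (f ⁻¹' {x})

lemma vectorMeasure_eq_sum_fibers (v : VectorMeasure α F) (f : SimpleFunc α X) {A : Set α}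
    (hA : MeasurableSet A) : v A = ∑ x ∈ f.range, v (A ∩ f ⁻¹' {x}) := by
  have hcover : ⋃ x ∈ f.range, A ∩ f ⁻¹' {x} = A := by
    ext t
    simp
  rw [← VectorMeasure.of_biUnion_finset, hcover]
  · exact fun x _ z _ hxz ↦
      ((disjoint_singleton.2 hxz).preimage f).mono inter_subset_right inter_subset_right
  · exact fun x _ ↦ hA.inter (f.measurableSet_fiber x)

lemma simpleCurveMeasure_apply (σ : X → VectorMeasure α F) (f : SimpleFunc α X) {A : Set α}
    (hA : MeasurableSet A) :
    simpleCurveMeasure σ f A = ∑ x ∈ f.range, σ x (A ∩ f ⁻¹' {x}) := by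
  rw [simpleCurveMeasure, ← FunLike.coeAddMonoidHom_apply, map_sum, Finset.sum_apply]
  exact Finset.sum_congr rfl fun x _ ↦ VectorMeasure.restrict_apply _ (f.measurableSet_fiber x) hA

lemma norm_sub_simpleCurveMeasure_le {v : VectorMeasure α F} {σ : X → VectorMeasure α F}
    {f : SimpleFunc α X} {μ : Measure α} [IsFiniteMeasure μ] {A : Set α} {C : ℝ}
    (hA : MeasurableSet A)
    (h : ∀ t ∈ A, ∀ B ⊆ A, MeasurableSet B → (∀ s ∈ B, f s = f t) →
      ‖v B - σ (f t) B‖ ≤ C * μ.real B) :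
    ‖v A - simpleCurveMeasure σ f A‖ ≤ C * μ.real A := by
  have hfiber : ∀ x ∈ f.range, ‖v (A ∩ f ⁻¹' {x}) - σ x (A ∩ f ⁻¹' {x})‖ ≤
      C * μ.real (A ∩ f ⁻¹' {x}) := by
    intro x _
    rcases (A ∩ f ⁻¹' {x}).eq_empty_or_nonempty with hB | ⟨t, htA, rfl⟩
    · simp [hB]
    · exact h t htA _ inter_subset_left (hA.inter (f.measurableSet_fiber _)) fun s hs ↦ hs.2
  have hμ : μ.real A = ∑ x ∈ f.range, μ.real (A ∩ f ⁻¹' {x}) := by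
    simpa only [Measure.toSignedMeasure_apply_measurable, hA,
      hA.inter (f.measurableSet_fiber _)] using vectorMeasure_eq_sum_fibers μ.toSignedMeasure f hA
  rw [vectorMeasure_eq_sum_fibers v f hA, simpleCurveMeasure_apply σ f hA,
    ← Finset.sum_sub_distrib, hμ, Finset.mul_sum]
  exact norm_sum_le_of_le _ hfiber

variable [PseudoMetricSpace X]

/-- Uniform continuity on `D` of a family of vector measures, with the distance of two members
measured relative to the positive measure `μ`; this is what an `l`-bound provides. -/
def UniformContinuousOnRel (σ : X → VectorMeasure α F) (D : Set X) (μ : Measure α) : Prop :=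
  ∀ ε > 0, ∃ δ > 0, ∀ x ∈ D, ∀ z ∈ D, dist x z < δ →
    ∀ A, MeasurableSet A → ‖σ x A - σ z A‖ ≤ ε * μ.real A

namespace UniformContinuousOnRel

variable {σ : X → VectorMeasure α F} {D : Set X} {μ : Measure α} [IsFiniteMeasure μ]

lemma exists_norm_sub_simpleCurveMeasure_le (hσ : UniformContinuousOnRel σ D μ) {ε : ℝ}
    (hε : 0 < ε) : ∃ δ > 0, ∀ f : SimpleFunc α X, (∀ t, f t ∈ D) → ∀ x ∈ D, ∀ A,
      MeasurableSet A → (∀ t ∈ A, dist (f t) x < δ) →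
      ‖σ x A - simpleCurveMeasure σ f A‖ ≤ ε * μ.real A := by
  obtain ⟨δ, hδ, hσδ⟩ := hσ ε hε
  refine ⟨δ, hδ, fun f hf x hx A hA hfx ↦ norm_sub_simpleCurveMeasure_le hA fun t ht B _ hB _ ↦ ?_⟩
  exact hσδ x hx _ (hf t) (by simpa only [dist_comm] using hfx t ht) B hB

lemma exists_norm_simpleCurveMeasure_sub_le (hσ : UniformContinuousOnRel σ D μ) {ε : ℝ}
    (hε : 0 < ε) : ∃ δ > 0, ∀ f g : SimpleFunc α X, (∀ t, f t ∈ D) → (∀ t, g t ∈ D) →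
      (∀ t, dist (f t) (g t) < δ) → ∀ A, MeasurableSet A →
      ‖simpleCurveMeasure σ f A - simpleCurveMeasure σ g A‖ ≤ ε * μ.real A := by
  obtain ⟨δ, hδ, hσδ⟩ := hσ.exists_norm_sub_simpleCurveMeasure_le hε
  refine ⟨δ, hδ, fun f g hf hg hfg A hA ↦
    norm_sub_simpleCurveMeasure_le hA fun t _ B _ hB hgB ↦ ?_⟩
  rw [norm_sub_rev]
  exact hσδ f hf _ (hg t) B hB fun s hs ↦ hgB s hs ▸ hfg s

lemma cauchySeq_simpleCurveMeasure (hσ : UniformContinuousOnRel σ D μ)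
    {f : ℕ → SimpleFunc α X} (hfD : ∀ n t, f n t ∈ D)
    (hf : UniformCauchySeqOn (fun n t ↦ f n t) atTop univ) {A : Set α} (hA : MeasurableSet A) :
    CauchySeq fun n ↦ simpleCurveMeasure σ (f n) A := by
  refine Metric.cauchySeq_iff.2 fun ε hε ↦ ?_
  have hμ : 0 < μ.real A + 1 := by positivity
  obtain ⟨δ, hδ, hσδ⟩ := hσ.exists_norm_simpleCurveMeasure_sub_le (div_pos hε hμ)
  obtain ⟨n₀, hn₀⟩ := Metric.uniformCauchySeqOn_iff.1 hf δ hδ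
  refine ⟨n₀, fun n hn k hk ↦ ?_⟩
  calc dist (simpleCurveMeasure σ (f n) A) (simpleCurveMeasure σ (f k) A)
      ≤ ε / (μ.real A + 1) * μ.real A := by
        rw [dist_eq_norm]
        exact hσδ _ _ (hfD n) (hfD k) (fun t ↦ hn₀ n hn k hk t (mem_univ t)) A hA
    _ < ε / (μ.real A + 1) * (μ.real A + 1) := by gcongr; exact lt_add_one _
    _ = ε := div_mul_cancel₀ _ hμ.ne'

lemma exists_curveMeasure_of_tendstoUniformly [CompleteSpace F]
    (hσ : UniformContinuousOnRel σ D μ) {f : ℕ → SimpleFunc α X} {y : α → X}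
    (hfD : ∀ n t, f n t ∈ D) (hf : TendstoUniformly (fun n t ↦ f n t) y atTop) :
    ∃ Φ : Set α → F,
      (∀ A B, MeasurableSet A → MeasurableSet B → Disjoint A B → Φ (A ∪ B) = Φ A + Φ B) ∧
      ∀ ε > 0, ∃ δ > 0, ∀ x ∈ D, ∀ A, MeasurableSet A → (∀ t ∈ A, dist (y t) x < δ) →
        ‖Φ A - σ x A‖ ≤ ε * μ.real A := by
  have hlim (A : Set α) : ∃ L, MeasurableSet A →
      Tendsto (fun n ↦ simpleCurveMeasure σ (f n) A) atTop (𝓝 L) := by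
    by_cases hA : MeasurableSet A
    · obtain ⟨L, hL⟩ := cauchySeq_tendsto_of_complete
        (hσ.cauchySeq_simpleCurveMeasure hfD hf.tendstoUniformlyOn.uniformCauchySeqOn hA)
      exact ⟨L, fun _ ↦ hL⟩
    · exact ⟨0, fun h ↦ absurd h hA⟩
  choose Φ hΦ using hlim
  refine ⟨Φ, fun A B hA hB hAB ↦ tendsto_nhds_unique (hΦ _ (hA.union hB)) ?_, fun ε hε ↦ ?_⟩
  · simpa only [VectorMeasure.of_union hAB hA hB] using (hΦ A hA).add (hΦ B hB)
  · obtain ⟨δ, hδ, hσδ⟩ := hσ.exists_norm_sub_simpleCurveMeasure_le hε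
    refine ⟨δ / 2, half_pos hδ, fun x hx A hA hyx ↦ ?_⟩
    refine le_of_tendsto ((hΦ A hA).sub_const _).norm ?_
    filter_upwards [Metric.tendstoUniformly_iff.1 hf (δ / 2) (half_pos hδ)] with n hn
    rw [norm_sub_rev]
    refine hσδ (f n) (hfD n) x hx A hA fun t ht ↦ ?_
    linarith [dist_triangle_left (f n t) x (y t), hn t, hyx t ht]

end UniformContinuousOnRel

lemma exists_simpleFunc_dist_lt [MeasurableSpace X] [OpensMeasurableSpace X] {K : Set X}
    (hK : IsCompact K) (hne : K.Nonempty) {ε : ℝ} (hε : 0 < ε) :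
    ∃ q : SimpleFunc X X, (∀ x, q x ∈ K) ∧ ∀ x ∈ K, dist x (q x) < ε := by
  have := hne.to_subtype
  have := isCompact_iff_compactSpace.1 hK
  set e : ℕ → X := fun n ↦ TopologicalSpace.denseSeq K n
  obtain ⟨n, hn⟩ := hK.elim_directed_cover (fun n ↦ ⋃ k ≤ n, Metric.ball (e k) ε)
    (fun n ↦ isOpen_biUnion fun k _ ↦ Metric.isOpen_ball)
    (fun x hx ↦ by
      obtain ⟨k, hk⟩ :=
        (TopologicalSpace.denseRange_denseSeq K).exists_dist_lt (⟨x, hx⟩ : K) hε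
      exact mem_iUnion.2 ⟨k, mem_iUnion₂.2 ⟨k, le_rfl, hk⟩⟩)
    (directed_of_isDirected_le fun i k hik ↦ biUnion_mono (fun _ ↦ hik.trans') fun _ _ ↦ le_rfl)
  refine ⟨SimpleFunc.nearestPt e n, fun x ↦ Subtype.coe_prop _, fun x hx ↦ ?_⟩
  obtain ⟨k, hk, hxk⟩ := mem_iUnion₂.1 (hn hx)
  have hnearest := SimpleFunc.edist_nearestPt_le e x hk
  rw [edist_dist, edist_dist, ENNReal.ofReal_le_ofReal_iff dist_nonneg] at hnearest
  rw [dist_comm]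
  exact hnearest.trans_lt (dist_comm x (e k) ▸ hxk)

lemma UniformContinuousOnRel.exists_curveMeasure [CompleteSpace F] [MeasurableSpace X]
    [OpensMeasurableSpace X] {σ : X → VectorMeasure α F} {K : Set X} {μ : Measure α}
    [IsFiniteMeasure μ] (hσ : UniformContinuousOnRel σ K μ) (hK : IsCompact K) (hne : K.Nonempty)
    {y : α → X} (hy : Measurable y) (hyK : ∀ t, y t ∈ K) :
    ∃ Φ : Set α → F,
      (∀ A B, MeasurableSet A → MeasurableSet B → Disjoint A B → Φ (A ∪ B) = Φ A + Φ B) ∧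
      ∀ ε > 0, ∃ δ > 0, ∀ x ∈ K, ∀ A, MeasurableSet A → (∀ t ∈ A, dist (y t) x < δ) →
        ‖Φ A - σ x A‖ ≤ ε * μ.real A := by
  choose q hqK hq using fun n : ℕ ↦
    exists_simpleFunc_dist_lt hK hne (Nat.one_div_pos_of_nat (n := n))
  refine hσ.exists_curveMeasure_of_tendstoUniformly (f := fun n ↦ (q n).comp y hy)
    (fun n t ↦ hqK n (y t)) (Metric.tendstoUniformly_iff.2 fun ε hε ↦ ?_)
  filter_upwards [tendsto_one_div_add_atTop_nhds_zero_nat.eventually_lt_const hε] with n hn t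
  exact (hq n (y t) (hyK t)).trans hn

end CurveMeasure

section BMeasure

variable {μ μ₁ μ₂ : Set ℝ → ℝ}

/-- The signed measure `A ↦ μ (A ∩ K)` obtained by cutting a b-measure down to a bounded Borel
set `K`. -/
noncomputable def IsBMeasure.restrict (hμ : IsBMeasure μ) {K : Set ℝ}
    (hK : Bornology.IsBounded K) (hKm : MeasurableSet K) : SignedMeasure ℝ where
  measureOf' A := by classical exact if MeasurableSet A then μ (A ∩ K) else 0
  empty' := by simp [hμ.empty]
  not_measurable' _ hA := if_neg hA
  m_iUnion' A hA hdisj := by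
    simp only [hA, MeasurableSet.iUnion hA, if_true, iUnion_inter]
    exact hμ.countably_additive _ (fun n ↦ (hA n).inter hKm) (fun _ ↦ hK.subset inter_subset_right)
      (fun _ _ hij ↦ (hdisj hij).mono inter_subset_left inter_subset_left)
      (hK.subset (iUnion_subset fun _ ↦ inter_subset_right))

lemma IsBMeasure.restrict_apply (hμ : IsBMeasure μ) {K A : Set ℝ} (hK : Bornology.IsBounded K)
    (hKm : MeasurableSet K) (hA : MeasurableSet A) : hμ.restrict hK hKm A = μ (A ∩ K) :=
  if_pos hA

lemma IsBMeasure.restrict_Ioc (hμ : IsBMeasure μ) {K : Set ℝ} (hK : Bornology.IsBounded K)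
    (hKm : MeasurableSet K) {s t : ℝ} (hst : s ≤ t) (hstK : Icc s t ⊆ K) :
    hμ.restrict hK hKm (Ioc s t) = μ (Icc s t) := by
  have hadd := (hμ.restrict hK hKm).of_union (A := {s}) (B := Ioc s t) (by simp)
    (measurableSet_singleton s) measurableSet_Ioc
  have hs : {s} ∩ K = {s} := inter_eq_left.2 (singleton_subset_iff.2 (hstK (left_mem_Icc.2 hst)))
  rwa [singleton_union, Ioc_insert_left hst, hμ.restrict_apply hK hKm measurableSet_Icc,
    hμ.restrict_apply hK hKm (measurableSet_singleton s), hs, hμ.singleton, zero_add,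
    inter_eq_left.2 hstK, eq_comm] at hadd

lemma isBorelPartition_const {A : Set ℝ} (hA : MeasurableSet A) :
    IsBorelPartition A fun _ : Fin 1 ↦ A :=
  ⟨fun _ ↦ hA, Subsingleton.pairwise, iUnion_const A⟩

lemma TVLE.abs_le {m : Measure ℝ} (h : TVLE μ m) {A : Set ℝ} (hA : Bornology.IsBounded A)
    (hAm : MeasurableSet A) : |μ A| ≤ m.real A := by
  simpa [measureReal_def] using h A hA hAm 1 _ (isBorelPartition_const hAm)

lemma DiffLE.abs_sub_le {C : ℝ} {l : Measure ℝ} (h : DiffLE μ₁ μ₂ C l) {A : Set ℝ}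
    (hA : Bornology.IsBounded A) (hAm : MeasurableSet A) : |μ₁ A - μ₂ A| ≤ C * l.real A := by
  simpa [measureReal_def] using h A hA hAm 1 _ (isBorelPartition_const hAm)

end BMeasure

namespace GoodMeasure

variable {m : Measure ℝ}

lemma measure_Icc_ne_top (hm : GoodMeasure m) (a b : ℝ) : m (Icc a b) ≠ ⊤ :=
  have := hm.1
  isCompact_Icc.measure_ne_top

lemma measureReal_mono_Icc (hm : GoodMeasure m) {A : Set ℝ} {a b : ℝ} (hA : A ⊆ Icc a b) :
    m.real A ≤ m.real (Icc a b) :=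
  measureReal_mono hA (hm.measure_Icc_ne_top a b)

lemma measureReal_Icc_add (hm : GoodMeasure m) {a b c : ℝ} (hab : a ≤ b) (hbc : b ≤ c) :
    m.real (Icc a b) + m.real (Icc b c) = m.real (Icc a c) := by
  have : NullSingletonClass m := ⟨hm.2⟩
  have hdisj : AEDisjoint m (Icc a b) (Icc b c) := by
    rw [AEDisjoint, Icc_inter_Icc_eq_singleton hab hbc, hm.2]
  rw [← Icc_union_Icc_eq_Icc hab hbc, measureReal_union₀ nullMeasurableSet_Icc hdisj
    (hm.measure_Icc_ne_top a b) (hm.measure_Icc_ne_top b c)]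

lemma tendsto_measureReal_Icc (hm : GoodMeasure m) (t : ℝ) :
    Tendsto (fun δ ↦ m.real (Icc (t - δ) (t + δ))) (𝓝 0) (𝓝 0) := by
  have := hm.1
  have : NullSingletonClass m := ⟨hm.2⟩
  exact (ENNReal.tendsto_toReal ENNReal.zero_ne_top).comp (tendsto_measure_Icc m t)

lemma eventually_mul_measureReal_Icc_lt (hm : GoodMeasure m) (C t : ℝ) {r : ℝ} (hr : 0 < r) :
    ∀ᶠ δ in 𝓝[>] 0, C * m.real (Icc (t - δ) (t + δ)) < r := by
  have hlim := (hm.tendsto_measureReal_Icc t).const_mul C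
  rw [mul_zero] at hlim
  exact (hlim.mono_left nhdsWithin_le_nhds).eventually_lt_const hr

lemma continuousOn_of_abs_sub_le (hm : GoodMeasure m) {Ψ : ℝ → ℝ} {c d : ℝ}
    (hΨ : ∀ a b, c ≤ a → a ≤ b → b ≤ d → |Ψ b - Ψ a| ≤ m.real (Icc a b)) :
    ContinuousOn Ψ (Icc c d) := by
  intro t ht
  refine tendsto_iff_dist_tendsto_zero.2 (squeeze_zero' (.of_forall fun _ ↦ dist_nonneg)
    (g := fun s ↦ m.real (Icc (t - |s - t|) (t + |s - t|))) ?_ ?_)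
  · filter_upwards [self_mem_nhdsWithin] with s hs
    rw [Real.dist_eq]
    rcases le_total s t with hst | hts
    · rw [abs_sub_comm]
      refine (hΨ s t hs.1 hst ht.2).trans (hm.measureReal_mono_Icc (Icc_subset_Icc ?_ ?_)) <;>
        grind
    · refine (hΨ t s ht.1 hts hs.2).trans (hm.measureReal_mono_Icc (Icc_subset_Icc ?_ ?_)) <;>
        grind
  · have hdist : Tendsto (fun s ↦ |s - t|) (𝓝[Icc c d] t) (𝓝 0) :=
      tendsto_nhdsWithin_of_tendsto_nhds (Continuous.tendsto' (by fun_prop) _ _ (by simp))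
    exact (hm.tendsto_measureReal_Icc t).comp hdist

end GoodMeasure

namespace TaggedPartition

variable {a b : ℝ} (P : TaggedPartition a b)

lemma monotoneOn : MonotoneOn P.t (Iic P.k) :=
  (strictMonoOn_Iic_of_lt_succ P.lt).monotoneOn

lemma le_t {i : ℕ} (hi : i ≤ P.k) : a ≤ P.t i :=
  P.left.symm.trans_le (P.monotoneOn (Nat.zero_le P.k) hi (Nat.zero_le i))

lemma t_le {i : ℕ} (hi : i ≤ P.k) : P.t i ≤ b :=
  (P.monotoneOn hi self_mem_Iic hi).trans_eq P.right

lemma tag_mem_Icc {i : ℕ} (hi : i < P.k) : P.tag i ∈ Icc a b :=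
  Icc_subset_Icc (P.le_t hi.le) (P.t_le hi) (P.tag_mem i hi)

lemma sum_measureReal {m : Measure ℝ} (hm : GoodMeasure m) :
    ∑ i ∈ Finset.range P.k, m.real (Icc (P.t i) (P.t (i + 1))) = m.real (Icc a b) := by
  have hpartial : ∀ n ≤ P.k,
      ∑ i ∈ Finset.range n, m.real (Icc (P.t i) (P.t (i + 1))) = m.real (Icc a (P.t n)) := by
    intro n hn
    induction n with
    | zero => simp [P.left, measureReal_def, hm.2]
    | succ n ih =>
      rw [Finset.sum_range_succ, ih (by lia),
        hm.measureReal_Icc_add (P.le_t (by lia)) (P.lt n hn).le]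
  rw [hpartial P.k le_rfl, P.right]

lemma abs_sum_sub_sum_le {l : Measure ℝ} (hl : GoodMeasure l) {C : ℝ} {F G : ℕ → ℝ}
    (hFG : ∀ i < P.k, |F i - G i| ≤ C * l.real (Icc (P.t i) (P.t (i + 1)))) :
    |∑ i ∈ Finset.range P.k, F i - ∑ i ∈ Finset.range P.k, G i| ≤ C * l.real (Icc a b) := by
  rw [← Finset.sum_sub_distrib, ← P.sum_measureReal hl, Finset.mul_sum]
  exact Finset.abs_sum_le_sum_abs _ _ |>.trans <|
    Finset.sum_le_sum fun i hi ↦ hFG i (Finset.mem_range.1 hi)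

lemma MeshLT.mono {P : TaggedPartition a b} {δ δ' : ℝ} (hP : P.MeshLT δ) (hδ : δ ≤ δ') :
    P.MeshLT δ' :=
  fun i hi ↦ (hP i hi).trans_le hδ

lemma exists_meshLT {δ : ℝ} (hab : a < b) (hδ : 0 < δ) : ∃ P : TaggedPartition a b, P.MeshLT δ := by
  obtain ⟨n, hn⟩ := exists_nat_gt ((b - a) / δ)
  have hba : 0 < b - a := sub_pos.2 hab
  have hn₀ : (0 : ℝ) < n := (div_pos hba hδ).trans hn
  have hstep : 0 < (b - a) / n := div_pos hba hn₀
  have hlt (i : ℕ) : a + i * ((b - a) / n) < a + (i + 1 : ℕ) * ((b - a) / n) := by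
    push_cast
    linarith
  refine ⟨⟨n, Nat.cast_pos.1 hn₀, fun i ↦ a + i * ((b - a) / n), fun i ↦ a + i * ((b - a) / n),
    by simp, by field_simp; ring, fun i _ ↦ hlt i, fun i _ ↦ left_mem_Icc.2 (hlt i).le⟩,
    fun i _ ↦ ?_⟩
  calc a + (i + 1 : ℕ) * ((b - a) / n) - (a + i * ((b - a) / n)) = (b - a) / n := by
        push_cast
        ring
    _ < δ := (div_lt_comm₀ hn₀ hδ).2 hn

end TaggedPartition

section CurveIntegral

variable {X : Type*} {ν ν' : X → Set ℝ → ℝ} {y z : ℝ → X} {l : Measure ℝ} {a b c d L L' : ℝ}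

lemma IsCurveIntegral.congr (hyz : EqOn y z (Icc a b)) (hL : IsCurveIntegral ν y a b L) :
    IsCurveIntegral ν z a b L := by
  intro ε hε
  obtain ⟨δ, hδ, hLδ⟩ := hL ε hε
  refine ⟨δ, hδ, fun P hP ↦ ?_⟩
  have hsum : RiemannSum ν z P = RiemannSum ν y P := Finset.sum_congr rfl fun i hi ↦ by
    rw [hyz (P.tag_mem_Icc (Finset.mem_range.1 hi))]
  exact hsum ▸ hLδ P hP

lemma IsCurveIntegral.abs_sub_le (hab : a < b) (hl : GoodMeasure l) {C : ℝ}
    (hC : ∀ τ ∈ Icc a b, ∀ s t, |ν (y τ) (Icc s t) - ν' (z τ) (Icc s t)| ≤ C * l.real (Icc s t))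
    (hL : IsCurveIntegral ν y a b L) (hL' : IsCurveIntegral ν' z a b L') :
    |L - L'| ≤ C * l.real (Icc a b) := by
  refine le_of_forall_pos_le_add fun ε hε ↦ ?_
  obtain ⟨δ, hδ, hLδ⟩ := hL (ε / 2) (half_pos hε)
  obtain ⟨δ', hδ', hLδ'⟩ := hL' (ε / 2) (half_pos hε)
  obtain ⟨P, hP⟩ := TaggedPartition.exists_meshLT hab (lt_min hδ hδ')
  have hy := hLδ P (hP.mono (min_le_left _ _))
  have hz := hLδ' P (hP.mono (min_le_right _ _))
  have hsum : |RiemannSum ν y P - RiemannSum ν' z P| ≤ C * l.real (Icc a b) :=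
    P.abs_sum_sub_sum_le hl fun i hi ↦ hC _ (P.tag_mem_Icc hi) _ _
  rw [abs_sub_comm] at hz
  calc |L - L'| ≤ |L - RiemannSum ν y P| + |RiemannSum ν y P - RiemannSum ν' z P|
        + |RiemannSum ν' z P - L'| :=
        (_root_.abs_sub_le _ _ _).trans (add_le_add_left (_root_.abs_sub_le _ _ _) _)
    _ ≤ C * l.real (Icc a b) + ε := by linarith

lemma isCurveIntegral_zero : IsCurveIntegral (0 : X → Set ℝ → ℝ) y a b 0 :=
  fun ε hε ↦ ⟨1, one_pos, fun P _ ↦ by simpa [RiemannSum] using hε⟩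

lemma isCurveIntegral_of_primitive (hl : GoodMeasure l) {Ψ : ℝ → ℝ}
    (hΨ : ∀ ε > 0, ∃ δ > 0, ∀ s τ t, c ≤ s → s ≤ τ → τ ≤ t → t ≤ d → t - s < δ →
      |Ψ t - Ψ s - ν (y τ) (Icc s t)| ≤ ε * l.real (Icc s t)) (hca : c ≤ a) (hbd : b ≤ d) :
    IsCurveIntegral ν y a b (Ψ b - Ψ a) := by
  intro ε hε
  have hpos : 0 < l.real (Icc a b) + 1 := by positivity
  obtain ⟨δ, hδ, hΨδ⟩ := hΨ (ε / (l.real (Icc a b) + 1)) (div_pos hε hpos)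
  refine ⟨δ, hδ, fun P hP ↦ ?_⟩
  have htelescope : Ψ b - Ψ a = ∑ i ∈ Finset.range P.k, (Ψ (P.t (i + 1)) - Ψ (P.t i)) := by
    rw [Finset.sum_range_sub (fun i ↦ Ψ (P.t i)), P.left, P.right]
  calc |Ψ b - Ψ a - RiemannSum ν y P| ≤ ε / (l.real (Icc a b) + 1) * l.real (Icc a b) := by
        rw [htelescope]
        exact P.abs_sum_sub_sum_le hl fun i hi ↦ hΨδ _ _ _ (hca.trans (P.le_t hi.le))
          (P.tag_mem i hi).1 (P.tag_mem i hi).2 ((P.t_le hi).trans hbd) (hP i hi)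
    _ < ε / (l.real (Icc a b) + 1) * (l.real (Icc a b) + 1) := by gcongr; exact lt_add_one _
    _ = ε := div_mul_cancel₀ _ hpos.ne'

lemma IsSignedCurveIntegral.congr (hyz : EqOn y z (uIcc a b))
    (hL : IsSignedCurveIntegral ν y a b L) : IsSignedCurveIntegral ν z a b L := by
  rcases hL with ⟨hab, hL⟩ | ⟨hba, hL⟩
  · exact .inl ⟨hab, hL.congr (uIcc_of_le hab ▸ hyz)⟩
  · exact .inr ⟨hba, hL.congr (uIcc_of_ge hba.le ▸ hyz)⟩

lemma isSignedCurveIntegral_zero : IsSignedCurveIntegral (0 : X → Set ℝ → ℝ) y a b 0 := by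
  rcases le_or_gt a b with hab | hba
  · exact .inl ⟨hab, isCurveIntegral_zero⟩
  · exact .inr ⟨hba, by simpa only [neg_zero] using isCurveIntegral_zero⟩

-- The case `a = b` is excluded: `[a, a]` has no tagged partition, so that `IsCurveIntegral ν y a a`
-- holds of every `L`.
lemma IsSignedCurveIntegral.abs_sub_le (hab : a ≠ b) (hl : GoodMeasure l) {C : ℝ}
    (hC : ∀ τ ∈ uIcc a b, ∀ s t, |ν (y τ) (Icc s t) - ν' (z τ) (Icc s t)| ≤ C * l.real (Icc s t))
    (hL : IsSignedCurveIntegral ν y a b L) (hL' : IsSignedCurveIntegral ν' z a b L') :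
    |L - L'| ≤ C * l.real (uIcc a b) := by
  rcases hab.lt_or_gt with hab | hba
  · rw [uIcc_of_le hab.le] at hC ⊢
    have hL := hL.resolve_right fun h ↦ hab.not_gt h.1
    have hL' := hL'.resolve_right fun h ↦ hab.not_gt h.1
    exact hL.2.abs_sub_le hab hl hC hL'.2
  · rw [uIcc_of_ge hba.le] at hC ⊢
    have hL := hL.resolve_left fun h ↦ hba.not_ge h.1
    have hL' := hL'.resolve_left fun h ↦ hba.not_ge h.1
    rw [abs_sub_comm, ← neg_sub_neg]
    exact hL.2.abs_sub_le hba hl hC hL'.2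

lemma isSignedCurveIntegral_of_primitive {Ψ : ℝ → ℝ}
    (hΨ : ∀ a b, c ≤ a → b ≤ d → IsCurveIntegral ν y a b (Ψ b - Ψ a)) (ha : a ∈ Icc c d)
    (hb : b ∈ Icc c d) : IsSignedCurveIntegral ν y a b (Ψ b - Ψ a) := by
  rcases le_or_gt a b with hab | hba
  · exact .inl ⟨hab, hΨ a b ha.1 hb.2⟩
  · exact .inr ⟨hba, (neg_sub (Ψ b) (Ψ a)).symm ▸ hΨ b a hb.1 ha.2⟩

end CurveIntegral

section Bounds

variable {ν : E → Set ℝ → ℝ} {y z : ℝ → E} {m l : Measure ℝ} {ω : ℝ → ℝ} {j : ℕ}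
  {a b c d L L' : ℝ}

lemma HasMBound.abs_le_of_isSignedCurveIntegral (hm : HasMBound ν j m) (hab : a ≠ b)
    (hy : ∀ τ ∈ uIcc a b, ‖y τ‖ ≤ j) (hL : IsSignedCurveIntegral ν y a b L) :
    |L| ≤ m.real (uIcc a b) := by
  have h := hL.abs_sub_le (C := 1) hab hm.1 (fun τ hτ s t ↦ ?_)
    (isSignedCurveIntegral_zero (y := y))
  · rwa [sub_zero, one_mul] at h
  · rw [one_mul, Pi.zero_apply, Pi.zero_apply, sub_zero]
    exact (hm.2 _ (hy τ hτ)).abs_le (Metric.isBounded_Icc s t) measurableSet_Icc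

lemma HasLBound.abs_sub_le_of_isSignedCurveIntegral (hl : HasLBound ω ν j l) (hab : a ≠ b)
    (hy : ∀ τ ∈ uIcc a b, ‖y τ‖ ≤ j) (hz : ∀ τ ∈ uIcc a b, ‖z τ‖ ≤ j) {D : ℝ}
    (hD : ∀ τ ∈ uIcc a b, ω ‖y τ - z τ‖ ≤ D)
    (hL : IsSignedCurveIntegral ν y a b L) (hL' : IsSignedCurveIntegral ν z a b L') :
    |L - L'| ≤ D * l.real (uIcc a b) := by
  refine hL.abs_sub_le hab hl.1 (fun τ hτ s t ↦ ?_) hL'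
  calc |ν (y τ) (Icc s t) - ν (z τ) (Icc s t)| ≤ ω ‖y τ - z τ‖ * l.real (Icc s t) :=
        (hl.2 _ _ (hy τ hτ) (hz τ hτ)).abs_sub_le (Metric.isBounded_Icc s t) measurableSet_Icc
    _ ≤ D * l.real (Icc s t) := by gcongr; exact hD τ hτ

lemma HasLBound.uniformContinuousOnRel (hl : HasLBound ω ν j l)
    (hω : Tendsto ω (𝓝[≥] 0) (𝓝 0)) (hν : ∀ x, IsBMeasure (ν x)) {K : Set ℝ}
    (hK : Bornology.IsBounded K) (hKm : MeasurableSet K) {D : Set E} (hD : ∀ x ∈ D, ‖x‖ ≤ j) :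
    UniformContinuousOnRel (fun x ↦ (hν x).restrict hK hKm) D (l.restrict K) := by
  intro ε hε
  obtain ⟨δ, hδ, hωδ⟩ := mem_nhdsGE_iff_exists_Ico_subset.1 (hω.eventually_le_const hε)
  refine ⟨δ, hδ, fun x hx z hz hxz A hA ↦ ?_⟩
  have hω_le : ω ‖x - z‖ ≤ ε := hωδ ⟨norm_nonneg _, dist_eq_norm x z ▸ hxz⟩
  rw [IsBMeasure.restrict_apply _ hK hKm hA, IsBMeasure.restrict_apply _ hK hKm hA,
    measureReal_restrict_apply hA]
  calc |ν x (A ∩ K) - ν z (A ∩ K)| ≤ ω ‖x - z‖ * l.real (A ∩ K) :=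
        (hl.2 x z (hD x hx) (hD z hz)).abs_sub_le (hK.subset inter_subset_right) (hA.inter hKm)
    _ ≤ ε * l.real (A ∩ K) := by gcongr

lemma HasLBound.exists_additive_approx (hl : HasLBound ω ν j l) (hω : Tendsto ω (𝓝[≥] 0) (𝓝 0))
    (hν : ∀ x, IsBMeasure (ν x)) (hcd : c ≤ d) (hy : ContinuousOn y (Icc c d))
    (hyj : ∀ t ∈ Icc c d, ‖y t‖ ≤ j) :
    ∃ Φ : Set ℝ → ℝ,
      (∀ A B, MeasurableSet A → MeasurableSet B → Disjoint A B → Φ (A ∪ B) = Φ A + Φ B) ∧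
      ∀ ε > 0, ∃ η > 0, ∀ s τ t, c ≤ s → s ≤ τ → τ ≤ t → t ≤ d →
        (∀ u ∈ Icc s t, dist (y u) (y τ) < η) →
        |Φ (Ioc s t) - ν (y τ) (Icc s t)| ≤ ε * l.real (Icc s t) := by
  borelize E
  have hfin : IsFiniteMeasure (l.restrict (Icc c d)) :=
    isFiniteMeasure_restrict.2 (hl.1.measure_Icc_ne_top c d)
  have hσ := hl.uniformContinuousOnRel hω hν (Metric.isBounded_Icc c d) measurableSet_Icc
    (forall_mem_image.2 hyj)
  obtain ⟨Φ, hadd, hΦ⟩ := hσ.exists_curveMeasure (isCompact_Icc.image_of_continuousOn hy)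
    ((nonempty_Icc.2 hcd).image y) (y := IccExtend hcd ((Icc c d).domRestrict y))
    hy.domRestrict.Icc_extend'.measurable (fun t ↦ mem_image_of_mem y (Subtype.coe_prop _))
  refine ⟨Φ, hadd, fun ε hε ↦ ?_⟩
  obtain ⟨η, hη, hΦη⟩ := hΦ ε hε
  refine ⟨η, hη, fun s τ t hcs hsτ hτt htd hclose ↦ ?_⟩
  have hsub : Icc s t ⊆ Icc c d := Icc_subset_Icc hcs htd
  have hest := hΦη (y τ) (mem_image_of_mem y (hsub ⟨hsτ, hτt⟩)) (Ioc s t) measurableSet_Ioc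
    fun u hu ↦ by
      have hu := Ioc_subset_Icc_self hu
      rw [IccExtend_of_mem hcd _ (hsub hu)]
      exact hclose u hu
  rw [(hν _).restrict_Ioc _ _ (hsτ.trans hτt) hsub, measureReal_restrict_apply measurableSet_Ioc]
    at hest
  refine hest.trans (mul_le_mul_of_nonneg_left ?_ hε.le)
  exact hl.1.measureReal_mono_Icc (inter_subset_left.trans Ioc_subset_Icc_self)

lemma HasLBound.exists_approx_primitive (hl : HasLBound ω ν j l) (hω : Tendsto ω (𝓝[≥] 0) (𝓝 0))
    (hν : ∀ x, IsBMeasure (ν x)) (hcd : c ≤ d) (hy : ContinuousOn y (Icc c d))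
    (hyj : ∀ t ∈ Icc c d, ‖y t‖ ≤ j) :
    ∃ Ψ : ℝ → ℝ, ∀ ε > 0, ∃ δ > 0, ∀ s τ t, c ≤ s → s ≤ τ → τ ≤ t → t ≤ d → t - s < δ →
      |Ψ t - Ψ s - ν (y τ) (Icc s t)| ≤ ε * l.real (Icc s t) := by
  obtain ⟨Φ, hadd, hΦ⟩ := hl.exists_additive_approx hω hν hcd hy hyj
  refine ⟨fun t ↦ Φ (Ioc c t), fun ε hε ↦ ?_⟩
  obtain ⟨η, hη, hΦη⟩ := hΦ ε hε
  obtain ⟨δ, hδ, hyδ⟩ := Metric.uniformContinuousOn_iff.1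
    (isCompact_Icc.uniformContinuousOn_of_continuous hy) η hη
  refine ⟨δ, hδ, fun s τ t hcs hsτ hτt htd hts ↦ ?_⟩
  have hsub : Icc s t ⊆ Icc c d := Icc_subset_Icc hcs htd
  have hsplit : Φ (Ioc c t) = Φ (Ioc c s) + Φ (Ioc s t) := by
    rw [← Ioc_union_Ioc_eq_Ioc hcs (hsτ.trans hτt),
      hadd _ _ measurableSet_Ioc measurableSet_Ioc (Ioc_disjoint_Ioc_of_le le_rfl)]
  simp only [hsplit, add_sub_cancel_left]
  exact hΦη s τ t hcs hsτ hτt htd fun u hu ↦ hyδ u (hsub hu) τ (hsub ⟨hsτ, hτt⟩)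
    ((Real.dist_le_of_mem_Icc hu ⟨hsτ, hτt⟩).trans_lt hts)

lemma HasLBound.exists_primitive (hl : HasLBound ω ν j l) (hω : Tendsto ω (𝓝[≥] 0) (𝓝 0))
    (hν : ∀ x, IsBMeasure (ν x)) (hcd : c ≤ d) (hy : ContinuousOn y (Icc c d))
    (hyj : ∀ t ∈ Icc c d, ‖y t‖ ≤ j) :
    ∃ Ψ : ℝ → ℝ, ∀ a b, c ≤ a → b ≤ d → IsCurveIntegral ν y a b (Ψ b - Ψ a) := by
  obtain ⟨Ψ, hΨ⟩ := hl.exists_approx_primitive hω hν hcd hy hyj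
  exact ⟨Ψ, fun a b hca hbd ↦ isCurveIntegral_of_primitive hl.1 hΨ hca hbd⟩

lemma HasMBound.continuousOn_of_primitive (hm : HasMBound ν j m) (hyj : ∀ t ∈ Icc c d, ‖y t‖ ≤ j)
    {Ψ : ℝ → ℝ} (hΨ : ∀ a b, c ≤ a → b ≤ d → IsCurveIntegral ν y a b (Ψ b - Ψ a)) :
    ContinuousOn Ψ (Icc c d) := by
  refine hm.1.continuousOn_of_abs_sub_le fun a b hca hab hbd ↦ ?_
  rcases hab.eq_or_lt with rfl | hlt
  · simp
  · rw [← uIcc_of_le hab]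
    refine hm.abs_le_of_isSignedCurveIntegral hlt.ne (fun τ hτ ↦ hyj τ ?_)
      (.inl ⟨hab, hΨ a b hca hbd⟩)
    exact Icc_subset_Icc hca hbd (uIcc_of_le hab ▸ hτ)

end Bounds

lemma euclideanSpace_norm_le_card_mul {ι : Type*} [Fintype ι] {v : EuclideanSpace ℝ ι} {B : ℝ}
    (h : ∀ i, |v i| ≤ B) : ‖v‖ ≤ Fintype.card ι * B := by
  classical
  calc ‖v‖ = ‖∑ i, v i • EuclideanSpace.basisFun ι ℝ i‖ := by
        conv_lhs => rw [← (EuclideanSpace.basisFun ι ℝ).sum_repr v]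
        simp only [EuclideanSpace.basisFun_repr]
    _ ≤ ∑ i, |v i| := norm_sum_le_of_le _ fun i _ ↦ by simp [norm_smul]
    _ ≤ ∑ _i : ι, B := Finset.sum_le_sum fun i _ ↦ h i
    _ = Fintype.card ι * B := by simp

lemma forall_lt_of_forall_uIcc_le {g : ℝ → ℝ} {c d t₀ r : ℝ} (ht₀ : t₀ ∈ Icc c d)
    (hg : ContinuousOn g (Icc c d)) (h₀ : g t₀ < r)
    (H : ∀ t ∈ Icc c d, (∀ s ∈ uIcc t₀ t, g s ≤ r) → g t < r) : ∀ t ∈ Icc c d, g t < r := by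
  by_contra! hexit
  have hcompact : IsCompact (Icc c d ∩ g ⁻¹' Ici r) :=
    isCompact_Icc.of_isClosed_subset (hg.preimage_isClosed_of_isClosed isClosed_Icc isClosed_Ici)
      inter_subset_left
  -- At the exit point `t` closest to `t₀`, the bound `g ≤ r` still holds on all of `uIcc t₀ t`.
  obtain ⟨t, ⟨ht, hrt⟩, hmin⟩ := hcompact.exists_isMinOn hexit (f := fun s ↦ |s - t₀|) (by fun_prop)
  refine (H t ht fun s hs ↦ ?_).not_ge hrt
  by_contra! hrs
  have hsub : uIcc t₀ s ⊆ Icc c d :=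
    (uIcc_subset_uIcc_left hs).trans (uIcc_subset_Icc ht₀ ht)
  obtain ⟨u, hu, rfl⟩ := intermediate_value_uIcc (hg.mono hsub) (mem_uIcc_of_le h₀.le hrs.le)
  have htu : |t - t₀| ≤ |u - t₀| := hmin ⟨hsub hu, le_refl (g u)⟩
  have hus : u = s := by grind [mem_uIcc]
  exact hrs.ne (hus ▸ rfl)

lemma exists_mem_closedBall_eqOn_IccExtend {c d r : ℝ} (hcd : c ≤ d) (hr : 0 ≤ r)
    {w : ℝ → E} {y₀ : E} (hw : ContinuousOn w (Icc c d))
    (hball : ∀ t ∈ Icc c d, ‖w t - y₀‖ ≤ r) :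
    ∃ f ∈ Metric.closedBall (ContinuousMap.const (Icc c d) y₀) r,
      EqOn w (IccExtend hcd f) (Icc c d) := by
  refine ⟨⟨_, hw.domRestrict⟩, (ContinuousMap.dist_le hr).2 fun t ↦ ?_, fun t ht ↦ ?_⟩
  · rw [dist_eq_norm]
    exact hball t t.2
  · rw [IccExtend_of_mem hcd _ ht]
    rfl

lemma existsUnique_of_contracting_rel {X : Type*} [MetricSpace X] [CompleteSpace X] [Nonempty X]
    {r : X → X → Prop} {K : ℝ} (hK : K < 1) (htotal : ∀ x, ∃ w, r x w)
    (hr : ∀ x y w v, r x w → r y v → dist w v ≤ K * dist x y) : ∃! x, r x x := by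
  choose T hT using htotal
  have hcontr : ContractingWith K.toNNReal T := ⟨Real.toNNReal_lt_one.2 hK,
    .of_dist_le' fun x y ↦ hr x y _ _ (hT x) (hT y)⟩
  have hfixed : T hcontr.fixedPoint = hcontr.fixedPoint := hcontr.fixedPoint_isFixedPt
  refine ⟨hcontr.fixedPoint, by simpa only [hfixed] using hT hcontr.fixedPoint,
    fun x hx ↦ hcontr.fixedPoint_unique ?_⟩
  refine dist_le_zero.1 ((hr x x _ _ (hT x) hx).trans_eq ?_)
  rw [dist_self, mul_zero]

section Picard

variable {N : ℕ} {ν : Fin N → EuclideanSpace ℝ (Fin N) → Set ℝ → ℝ} {m l : Measure ℝ} {j : ℕ}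
  {t₀ c d : ℝ} {y₀ : EuclideanSpace ℝ (Fin N)} {S : Set ℝ}
  {y y' z w w' v : ℝ → EuclideanSpace ℝ (Fin N)}

/-- The Picard operator `w t = y₀ + ∫_{t₀}^t dν_{y(s)}` as a relation between the curves `y` and
`w`; a solution is a curve related to itself. The value `w t₀ = y₀` is prescribed because
`IsCurveIntegral ν y t₀ t₀` holds of every real number. -/
def IsPicardImage (ν : Fin N → EuclideanSpace ℝ (Fin N) → Set ℝ → ℝ) (t₀ : ℝ)
    (y₀ : EuclideanSpace ℝ (Fin N)) (S : Set ℝ) (y w : ℝ → EuclideanSpace ℝ (Fin N)) : Prop :=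
  w t₀ = y₀ ∧ ContinuousOn w S ∧
    ∀ t ∈ S, ∀ i, IsSignedCurveIntegral (ν i) y t₀ t (w t i - y₀ i)

lemma isSolutionOn_iff_isPicardImage :
    IsSolutionOn ν t₀ y₀ S y ↔ t₀ ∈ S ∧ IsPicardImage ν t₀ y₀ S y y :=
  Iff.rfl

namespace IsPicardImage

lemma congr (hS : S.OrdConnected) (ht₀ : t₀ ∈ S) (hy : EqOn y y' S) (hw : EqOn w w' S)
    (h : IsPicardImage ν t₀ y₀ S y w) : IsPicardImage ν t₀ y₀ S y' w' := by
  refine ⟨hw ht₀ ▸ h.1, h.2.1.congr hw.symm, fun t ht i ↦ ?_⟩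
  rw [← hw ht]
  exact (h.2.2 t ht i).congr (hy.mono (hS.uIcc_subset ht₀ ht))

lemma norm_sub_le (hm : ∀ i, HasMBound (ν i) j m) (ht₀ : t₀ ∈ Icc c d)
    (h : IsPicardImage ν t₀ y₀ (Icc c d) y w) {t : ℝ} (ht : t ∈ Icc c d)
    (hy : ∀ s ∈ uIcc t₀ t, ‖y s‖ ≤ j) : ‖w t - y₀‖ ≤ N * m.real (Icc c d) := by
  rcases eq_or_ne t₀ t with rfl | hne
  · rw [h.1, sub_self, norm_zero]
    positivity
  · have hcoord (i : Fin N) : |(w t - y₀) i| ≤ m.real (Icc c d) :=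
      ((hm i).abs_le_of_isSignedCurveIntegral hne hy (h.2.2 t ht i)).trans <|
        (hm i).1.measureReal_mono_Icc (uIcc_subset_Icc ht₀ ht)
    simpa only [Fintype.card_fin] using euclideanSpace_norm_le_card_mul hcoord

lemma norm_sub_le_mul (hl : ∀ i, HasLBound id (ν i) j l) (ht₀ : t₀ ∈ Icc c d)
    (hw : IsPicardImage ν t₀ y₀ (Icc c d) y w) (hv : IsPicardImage ν t₀ y₀ (Icc c d) z v)
    (hy : ∀ s ∈ Icc c d, ‖y s‖ ≤ j) (hz : ∀ s ∈ Icc c d, ‖z s‖ ≤ j) {D : ℝ} (hD : 0 ≤ D)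
    (hyz : ∀ s ∈ Icc c d, ‖y s - z s‖ ≤ D) {t : ℝ} (ht : t ∈ Icc c d) :
    ‖w t - v t‖ ≤ N * (D * l.real (Icc c d)) := by
  rcases eq_or_ne t₀ t with rfl | hne
  · rw [hw.1, hv.1, sub_self, norm_zero]
    positivity
  · have hsub : uIcc t₀ t ⊆ Icc c d := uIcc_subset_Icc ht₀ ht
    have hcoord (i : Fin N) : |(w t - v t) i| ≤ D * l.real (Icc c d) := by
      have hi := (hl i).abs_sub_le_of_isSignedCurveIntegral hne (fun s hs ↦ hy s (hsub hs))
        (fun s hs ↦ hz s (hsub hs)) (fun s hs ↦ hyz s (hsub hs)) (hw.2.2 t ht i) (hv.2.2 t ht i)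
      rw [sub_sub_sub_cancel_right] at hi
      exact hi.trans (mul_le_mul_of_nonneg_left ((hl i).1.measureReal_mono_Icc hsub) hD)
    simpa only [Fintype.card_fin] using euclideanSpace_norm_le_card_mul hcoord

lemma exists_of_continuousOn (hν : ∀ i x, IsBMeasure (ν i x)) (hm : ∀ i, HasMBound (ν i) j m)
    (hl : ∀ i, HasLBound id (ν i) j l) (ht₀ : t₀ ∈ Icc c d) (hy : ContinuousOn y (Icc c d))
    (hyj : ∀ t ∈ Icc c d, ‖y t‖ ≤ j) : ∃ w, IsPicardImage ν t₀ y₀ (Icc c d) y w := by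
  have hid : Tendsto id (𝓝[≥] (0 : ℝ)) (𝓝 0) := tendsto_id.mono_left nhdsWithin_le_nhds
  choose Ψ hΨ using fun i ↦
    (hl i).exists_primitive hid (hν i) (ht₀.1.trans ht₀.2) hy hyj
  refine ⟨fun t ↦ y₀ + WithLp.toLp 2 fun i ↦ Ψ i t - Ψ i t₀, ?_, ?_, fun t ht i ↦ ?_⟩
  · ext i
    simp
  · refine continuousOn_const.add ((PiLp.continuous_toLp 2 _).comp_continuousOn ?_)
    exact continuousOn_pi.2 fun i ↦
      ((hm i).continuousOn_of_primitive hyj (hΨ i)).sub continuousOn_const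
  · simpa only [PiLp.add_apply, add_sub_cancel_left] using
      isSignedCurveIntegral_of_primitive (hΨ i) ht₀ ht

end IsPicardImage

lemma IsSolutionOn.norm_sub_lt (hm : ∀ i, HasMBound (ν i) j m) {r : ℝ} (hr : 0 < r)
    (hj : ‖y₀‖ + r ≤ j) (hmr : N * m.real (Icc c d) < r)
    (hz : IsSolutionOn ν t₀ y₀ (Icc c d) z) : ∀ t ∈ Icc c d, ‖z t - y₀‖ < r := by
  obtain ⟨ht₀, hpicard⟩ := isSolutionOn_iff_isPicardImage.1 hz
  refine forall_lt_of_forall_uIcc_le ht₀ (hpicard.2.1.sub continuousOn_const).norm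
    (by simpa [hpicard.1] using hr) fun t ht hball ↦ ?_
  exact (hpicard.norm_sub_le hm ht₀ ht
    fun s hs ↦ (norm_le_norm_add_const_of_dist_le
      ((dist_eq_norm _ _).trans_le (hball s hs))).trans hj).trans_lt hmr

lemma exists_mem_closedBall_isPicardImage_IccExtend (hν : ∀ i x, IsBMeasure (ν i x))
    (hm : ∀ i, HasMBound (ν i) j m) (hl : ∀ i, HasLBound id (ν i) j l) {r : ℝ} (hr : 0 ≤ r)
    (hmr : N * m.real (Icc c d) ≤ r) (hcd : c ≤ d) (ht₀ : t₀ ∈ Icc c d)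
    {f : C(Icc c d, EuclideanSpace ℝ (Fin N))} (hf : ∀ t, ‖f t‖ ≤ j) :
    ∃ g ∈ Metric.closedBall (ContinuousMap.const (Icc c d) y₀) r,
      IsPicardImage ν t₀ y₀ (Icc c d) (IccExtend hcd f) (IccExtend hcd g) := by
  obtain ⟨w, hw⟩ := IsPicardImage.exists_of_continuousOn (y₀ := y₀) hν hm hl ht₀
    f.continuous.Icc_extend'.continuousOn fun t _ ↦ hf (projIcc c d hcd t)
  obtain ⟨g, hg, hwg⟩ := exists_mem_closedBall_eqOn_IccExtend hcd hr hw.2.1 fun t ht ↦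
    (hw.norm_sub_le hm ht₀ ht fun s _ ↦ hf (projIcc c d hcd s)).trans hmr
  exact ⟨g, hg, hw.congr ordConnected_Icc ht₀ (eqOn_refl _ _) hwg⟩

lemma dist_le_mul_of_isPicardImage_IccExtend (hl : ∀ i, HasLBound id (ν i) j l) (hcd : c ≤ d)
    (ht₀ : t₀ ∈ Icc c d) {f g φ γ : C(Icc c d, EuclideanSpace ℝ (Fin N))}
    (hf : ∀ t, ‖f t‖ ≤ j) (hg : ∀ t, ‖g t‖ ≤ j)
    (hφ : IsPicardImage ν t₀ y₀ (Icc c d) (IccExtend hcd f) (IccExtend hcd φ))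
    (hγ : IsPicardImage ν t₀ y₀ (Icc c d) (IccExtend hcd g) (IccExtend hcd γ)) :
    dist φ γ ≤ N * l.real (Icc c d) * dist f g := by
  refine (ContinuousMap.dist_le (by positivity)).2 fun t ↦ ?_
  have hfg (s : ℝ) : ‖IccExtend hcd f s - IccExtend hcd g s‖ ≤ dist f g := by
    rw [← dist_eq_norm]
    exact ContinuousMap.dist_apply_le_dist _
  calc dist (φ t) (γ t) = ‖IccExtend hcd φ t - IccExtend hcd γ t‖ := by
        rw [IccExtend_val, IccExtend_val, dist_eq_norm]
    _ ≤ N * (dist f g * l.real (Icc c d)) :=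
        hφ.norm_sub_le_mul hl ht₀ hγ (fun s _ ↦ hf (projIcc c d hcd s))
          (fun s _ ↦ hg (projIcc c d hcd s)) dist_nonneg (fun s _ ↦ hfg s) t.2
    _ = N * l.real (Icc c d) * dist f g := by ring

lemma existsUnique_isPicardImage_IccExtend (hν : ∀ i x, IsBMeasure (ν i x))
    (hm : ∀ i, HasMBound (ν i) j m) (hl : ∀ i, HasLBound id (ν i) j l) {r : ℝ} (hr : 0 ≤ r)
    (hj : ‖y₀‖ + r ≤ j) (hmr : N * m.real (Icc c d) ≤ r) (hl1 : N * l.real (Icc c d) < 1)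
    (hcd : c ≤ d) (ht₀ : t₀ ∈ Icc c d) :
    ∃! f : Metric.closedBall (ContinuousMap.const (Icc c d) y₀) r,
      IsPicardImage ν t₀ y₀ (Icc c d) (IccExtend hcd f.1) (IccExtend hcd f.1) := by
  set B := Metric.closedBall (ContinuousMap.const (Icc c d) y₀) r
  have hcomplete : CompleteSpace B := Metric.isClosed_closedBall.completeSpace_coe
  have hne : Nonempty B := ⟨⟨_, Metric.mem_closedBall_self hr⟩⟩
  have hbound (f : B) (t : Icc c d) : ‖f.1 t‖ ≤ j :=
    (norm_le_norm_add_const_of_dist_le ((ContinuousMap.dist_apply_le_dist t).trans f.2)).trans hj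
  refine existsUnique_of_contracting_rel
    (r := fun f g : B ↦ IsPicardImage ν t₀ y₀ (Icc c d) (IccExtend hcd f.1) (IccExtend hcd g.1))
    hl1 (fun f ↦ ?_) fun f g φ γ hφ hγ ↦
      dist_le_mul_of_isPicardImage_IccExtend hl hcd ht₀ (hbound f) (hbound g) hφ hγ
  obtain ⟨g, hg, hfg⟩ := exists_mem_closedBall_isPicardImage_IccExtend (y₀ := y₀) hν hm hl hr hmr
    hcd ht₀ (hbound f)
  exact ⟨⟨g, hg⟩, hfg⟩

theorem exists_isSolutionOn_Icc_forall_eqOn (hν : ∀ i x, IsBMeasure (ν i x))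
    (hm : ∀ i, HasMBound (ν i) j m) (hl : ∀ i, HasLBound id (ν i) j l) {r : ℝ} (hr : 0 < r)
    (hj : ‖y₀‖ + r ≤ j) (hmr : N * m.real (Icc c d) < r) (hl1 : N * l.real (Icc c d) < 1)
    (ht₀ : t₀ ∈ Icc c d) :
    ∃ y, IsSolutionOn ν t₀ y₀ (Icc c d) y ∧
      ∀ z, IsSolutionOn ν t₀ y₀ (Icc c d) z → EqOn z y (Icc c d) := by
  have hcd : c ≤ d := ht₀.1.trans ht₀.2
  obtain ⟨f, hf, hunique⟩ :=
    existsUnique_isPicardImage_IccExtend hν hm hl hr.le hj hmr.le hl1 hcd ht₀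
  refine ⟨IccExtend hcd f.1, isSolutionOn_iff_isPicardImage.2 ⟨ht₀, hf⟩, fun z hz ↦ ?_⟩
  have hpicard := (isSolutionOn_iff_isPicardImage.1 hz).2
  obtain ⟨g, hg, hzg⟩ := exists_mem_closedBall_eqOn_IccExtend hcd hr.le hpicard.2.1 fun t ht ↦
    (hz.norm_sub_lt hm hr hj hmr t ht).le
  have hgf : (⟨g, hg⟩ : Metric.closedBall (ContinuousMap.const (Icc c d) y₀) r) = f :=
    hunique _ (hpicard.congr ordConnected_Icc ht₀ hzg hzg)
  exact hgf ▸ hzg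

end Picard

theorem stmt15_general {N : ℕ} {νbar : Fin N → EuclideanSpace ℝ (Fin N) → Set ℝ → ℝ}
    {m l : Measure ℝ} {j : ℕ} (hν : ∀ i y, IsBMeasure (νbar i y))
    (hm : GoodMeasure m) (hmν : ∀ i, ∀ y : EuclideanSpace ℝ (Fin N), ‖y‖ ≤ j → TVLE (νbar i y) m)
    (hl : GoodMeasure l)
    (hlν : ∀ i, ∀ y₁ y₂ : EuclideanSpace ℝ (Fin N), ‖y₁‖ ≤ j → ‖y₂‖ ≤ j →
      DiffLE (νbar i y₁) (νbar i y₂) ‖y₁ - y₂‖ l)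
    (t₀ : ℝ) {y₀ : EuclideanSpace ℝ (Fin N)} (hj : ‖y₀‖ < j) :
    ∃ δ > (0 : ℝ), ∃ y : ℝ → EuclideanSpace ℝ (Fin N),
      IsSolutionOn νbar t₀ y₀ (Icc (t₀ - δ) (t₀ + δ)) y ∧
      ∀ z : ℝ → EuclideanSpace ℝ (Fin N),
        IsSolutionOn νbar t₀ y₀ (Icc (t₀ - δ) (t₀ + δ)) z →
        EqOn z y (Icc (t₀ - δ) (t₀ + δ)) := by
  have hr : 0 < j - ‖y₀‖ := sub_pos.2 hj
  obtain ⟨δ, ⟨hmδ, hlδ⟩, hδ⟩ := ((hm.eventually_mul_measureReal_Icc_lt N t₀ hr).and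
    (hl.eventually_mul_measureReal_Icc_lt N t₀ one_pos) |>.and self_mem_nhdsWithin).exists
  exact ⟨δ, hδ, exists_isSolutionOn_Icc_forall_eqOn hν (fun i ↦ ⟨hm, hmν i⟩)
    (fun i ↦ ⟨hl, hlν i⟩) hr (add_sub_cancel _ _).le hmδ hlδ ⟨by linarith, by linarith⟩⟩

theorem stmt15 {N : ℕ} (νbar : Fin N → EuclideanSpace ℝ (Fin N) → Set ℝ → ℝ)
    (mB lB : ℕ → Measure ℝ) (hν : IsNDimParamBMeasure νbar mB lB)
    (t₀ : ℝ) (y₀ : EuclideanSpace ℝ (Fin N)) :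
    ∃ δ > (0 : ℝ), ∃ y : ℝ → EuclideanSpace ℝ (Fin N),
      IsSolutionOn νbar t₀ y₀ (Set.Icc (t₀ - δ) (t₀ + δ)) y ∧
      ∀ z : ℝ → EuclideanSpace ℝ (Fin N),
        IsSolutionOn νbar t₀ y₀ (Set.Icc (t₀ - δ) (t₀ + δ)) z →
        Set.EqOn z y (Set.Icc (t₀ - δ) (t₀ + δ)) := by
  obtain ⟨j, hj⟩ := exists_nat_gt ‖y₀‖
  obtain ⟨hm, hl, hmν, hlν⟩ := hν.2 j (Nat.cast_pos.1 ((norm_nonneg y₀).trans_lt hj))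
  exact stmt15_general hν.1 hm hmν hl hlν t₀ hj
end
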